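/- arXiv:2203.01740 — 10 statements merged into one kernel-verified Lean document; each statement's English description precedes it below -/
import Mathlib

section
/- Let w₁, w₂ ≥ 0 with w₁ + w₂ > 0. In every weighted two-player congestion game with weights w₁, w₂ and uniform costs, every pure Nash equilibrium A and every action profile B satisfy C(A) ≤ (1 + (2·w₁·w₂ + max(w₁,w₂)²)/(w₁² + w₁·w₂ + w₂²)) · C(B). -/
open Finset Real

/-- A weighted two-player congestion game with weights `w₁, w₂`:
a finite set of resources `Fin n`, nonempty finite collections of actions
(subsets of resources) for each player, and nonnegative affine cost
coefficients `α r`, `β r` for each resource. -/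
structure CGame (w₁ w₂ : ℝ) where
  n : ℕ
  A1 : Finset (Finset (Fin n))
  A2 : Finset (Finset (Fin n))
  A1_nonempty : A1.Nonempty
  A2_nonempty : A2.Nonempty
  α : Fin n → ℝ
  β : Fin n → ℝ
  α_nonneg : ∀ r, 0 ≤ α r
  β_nonneg : ∀ r, 0 ≤ β r

namespace CGame

variable {w₁ w₂ : ℝ}

/-- The load of resource `r` under the action profile `(a₁, a₂)`. -/
def load (G : CGame w₁ w₂) (a₁ a₂ : Finset (Fin G.n)) (r : Fin G.n) : ℝ :=
  (if r ∈ a₁ then w₁ else 0) + (if r ∈ a₂ then w₂ else 0)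

/-- Uniform cost of player 1. -/
def C1uni (G : CGame w₁ w₂) (a₁ a₂ : Finset (Fin G.n)) : ℝ :=
  ∑ r ∈ a₁, (G.α r + G.β r * G.load a₁ a₂ r)

/-- Uniform cost of player 2. -/
def C2uni (G : CGame w₁ w₂) (a₁ a₂ : Finset (Fin G.n)) : ℝ :=
  ∑ r ∈ a₂, (G.α r + G.β r * G.load a₁ a₂ r)

/-- Uniform social cost. -/
def Cuni (G : CGame w₁ w₂) (a₁ a₂ : Finset (Fin G.n)) : ℝ :=
  G.C1uni a₁ a₂ + G.C2uni a₁ a₂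

/-- Proportional cost of player 1. -/
def C1prop (G : CGame w₁ w₂) (a₁ a₂ : Finset (Fin G.n)) : ℝ :=
  w₁ * ∑ r ∈ a₁, (G.α r + G.β r * G.load a₁ a₂ r)

/-- Proportional cost of player 2. -/
def C2prop (G : CGame w₁ w₂) (a₁ a₂ : Finset (Fin G.n)) : ℝ :=
  w₂ * ∑ r ∈ a₂, (G.α r + G.β r * G.load a₁ a₂ r)

/-- Proportional social cost. -/
def Cprop (G : CGame w₁ w₂) (a₁ a₂ : Finset (Fin G.n)) : ℝ :=
  G.C1prop a₁ a₂ + G.C2prop a₁ a₂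

/-- `(a₁, a₂)` is an action profile: each action is admissible for its player. -/
def IsProfile (G : CGame w₁ w₂) (a₁ a₂ : Finset (Fin G.n)) : Prop :=
  a₁ ∈ G.A1 ∧ a₂ ∈ G.A2

/-- The game is symmetric if both players have the same actions. -/
def Symm (G : CGame w₁ w₂) : Prop := G.A1 = G.A2

/-- Pure Nash equilibrium for uniform costs. -/
def IsNashUni (G : CGame w₁ w₂) (a₁ a₂ : Finset (Fin G.n)) : Prop :=
  G.IsProfile a₁ a₂ ∧
  (∀ b₁ ∈ G.A1, G.C1uni a₁ a₂ ≤ G.C1uni b₁ a₂) ∧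
  (∀ b₂ ∈ G.A2, G.C2uni a₁ a₂ ≤ G.C2uni a₁ b₂)

/-- Pure Nash equilibrium for proportional costs. -/
def IsNashProp (G : CGame w₁ w₂) (a₁ a₂ : Finset (Fin G.n)) : Prop :=
  G.IsProfile a₁ a₂ ∧
  (∀ b₁ ∈ G.A1, G.C1prop a₁ a₂ ≤ G.C1prop b₁ a₂) ∧
  (∀ b₂ ∈ G.A2, G.C2prop a₁ a₂ ≤ G.C2prop a₁ b₂)

/-- Subgame-perfect outcome with player 1 moving first, uniform costs. -/
def IsSPE1Uni (G : CGame w₁ w₂) (a₁ a₂ : Finset (Fin G.n)) : Prop :=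
  G.IsProfile a₁ a₂ ∧
  ∃ b : Finset (Fin G.n) → Finset (Fin G.n),
    (∀ x ∈ G.A1, b x ∈ G.A2) ∧
    (∀ x ∈ G.A1, ∀ y ∈ G.A2, G.C2uni x (b x) ≤ G.C2uni x y) ∧
    a₂ = b a₁ ∧
    (∀ x ∈ G.A1, G.C1uni a₁ a₂ ≤ G.C1uni x (b x))

/-- Subgame-perfect outcome with player 2 moving first, uniform costs. -/
def IsSPE2Uni (G : CGame w₁ w₂) (a₁ a₂ : Finset (Fin G.n)) : Prop :=
  G.IsProfile a₁ a₂ ∧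
  ∃ b : Finset (Fin G.n) → Finset (Fin G.n),
    (∀ x ∈ G.A2, b x ∈ G.A1) ∧
    (∀ x ∈ G.A2, ∀ y ∈ G.A1, G.C1uni (b x) x ≤ G.C1uni y x) ∧
    a₁ = b a₂ ∧
    (∀ x ∈ G.A2, G.C2uni a₁ a₂ ≤ G.C2uni (b x) x)

/-- Subgame-perfect outcome with player 1 moving first, proportional costs. -/
def IsSPE1Prop (G : CGame w₁ w₂) (a₁ a₂ : Finset (Fin G.n)) : Prop :=
  G.IsProfile a₁ a₂ ∧
  ∃ b : Finset (Fin G.n) → Finset (Fin G.n),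
    (∀ x ∈ G.A1, b x ∈ G.A2) ∧
    (∀ x ∈ G.A1, ∀ y ∈ G.A2, G.C2prop x (b x) ≤ G.C2prop x y) ∧
    a₂ = b a₁ ∧
    (∀ x ∈ G.A1, G.C1prop a₁ a₂ ≤ G.C1prop x (b x))

/-- Subgame-perfect outcome with player 2 moving first, proportional costs. -/
def IsSPE2Prop (G : CGame w₁ w₂) (a₁ a₂ : Finset (Fin G.n)) : Prop :=
  G.IsProfile a₁ a₂ ∧
  ∃ b : Finset (Fin G.n) → Finset (Fin G.n),
    (∀ x ∈ G.A2, b x ∈ G.A1) ∧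
    (∀ x ∈ G.A2, ∀ y ∈ G.A1, G.C1prop (b x) x ≤ G.C1prop y x) ∧
    a₁ = b a₂ ∧
    (∀ x ∈ G.A2, G.C2prop a₁ a₂ ≤ G.C2prop (b x) x)

end CGame

/-!
A resource has an affine cost `c x = α + β * x`, so `x * c y ≤ y * c x` for `x ≤ y`: costs are
concave with `0 ≤ c 0`. Let `w₂ ≤ w₁`, `s = w₁ + w₂`, `D = w₁² + w₁ w₂ + w₂²`, let `A` be the
equilibrium and `B` any profile. The two deviations satisfy
* `w₁ C₁(B₁, A₂) ≤ s C₁(B)`,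
* `D C₂(A₁, B₂) ≤ s ((2 w₁ + w₂) C₂(B) + (w₁ - w₂) C₁(A))`,

the second because `D = (2 w₁ + w₂) w₂ + (w₁ - w₂) w₁`. Weighting the equilibrium conditions of
players 1 and 2 by `w₁ (2 w₁ + w₂)` and `D`, the surplus `(w₁² - w₂²) C₁(A)` cancels, which leaves
`D C(A) ≤ s (2 w₁ + w₂) C(B)`.
-/

namespace CGame

variable {w₁ w₂ : ℝ} (G : CGame w₁ w₂) (a₁ a₂ b₁ b₂ : Finset (Fin G.n)) {r : Fin G.n} {x y : ℝ}

section Latency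

/-- The cost of using resource `r` when its load is `x`. The load is a free argument so that costs
at different loads can be compared. -/
def latency (r : Fin G.n) (x : ℝ) : ℝ :=
  G.α r + G.β r * x

theorem latency_nonneg (r : Fin G.n) (hx : 0 ≤ x) : 0 ≤ G.latency r x :=
  add_nonneg (G.α_nonneg r) (mul_nonneg (G.β_nonneg r) hx)

theorem latency_mono (r : Fin G.n) : Monotone (G.latency r) := fun _ _ hxy =>
  add_le_add_right (mul_le_mul_of_nonneg_left hxy (G.β_nonneg r)) _

theorem mul_latency_le_mul_latency (r : Fin G.n) (hxy : x ≤ y) :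
    x * G.latency r y ≤ y * G.latency r x := by
  unfold latency
  linear_combination mul_le_mul_of_nonneg_right hxy (G.α_nonneg r)

theorem mul_latency_add_le (hy : 0 ≤ y) (hyx : y ≤ x) (r : Fin G.n) :
    (x ^ 2 + x * y + y ^ 2) * G.latency r (x + y) ≤
      (x + y) * ((2 * x + y) * G.latency r y + (x - y) * G.latency r x) := by
  have hx : 0 ≤ x := hy.trans hyx
  have hscale_x := G.mul_latency_le_mul_latency r (le_add_of_nonneg_right hy : x ≤ x + y)
  have hscale_y := G.mul_latency_le_mul_latency r (le_add_of_nonneg_left hx : y ≤ x + y)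
  calc (x ^ 2 + x * y + y ^ 2) * G.latency r (x + y)
      = (2 * x + y) * (y * G.latency r (x + y)) +
          (x - y) * (x * G.latency r (x + y)) := by ring
    _ ≤ (2 * x + y) * ((x + y) * G.latency r y) +
          (x - y) * ((x + y) * G.latency r x) := by
        have : 0 ≤ x - y := sub_nonneg.2 hyx
        gcongr
    _ = (x + y) * ((2 * x + y) * G.latency r y + (x - y) * G.latency r x) := by ring

theorem C1uni_eq_sum_latency : G.C1uni a₁ a₂ = ∑ r ∈ a₁, G.latency r (G.load a₁ a₂ r) := rfl

theorem C2uni_eq_sum_latency : G.C2uni a₁ a₂ = ∑ r ∈ a₂, G.latency r (G.load a₁ a₂ r) := rfl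

end Latency

section Load

variable {a₁ a₂}

theorem load_le_add (h₁ : 0 ≤ w₁) (h₂ : 0 ≤ w₂) : G.load a₁ a₂ r ≤ w₁ + w₂ := by
  unfold load
  gcongr <;> split_ifs <;> simp [h₁, h₂]

theorem left_le_load (h₂ : 0 ≤ w₂) (hr : r ∈ a₁) : w₁ ≤ G.load a₁ a₂ r := by
  rw [load, if_pos hr]
  exact le_add_of_nonneg_right (by split_ifs <;> simp [h₂])

theorem right_le_load (h₁ : 0 ≤ w₁) (hr : r ∈ a₂) : w₂ ≤ G.load a₁ a₂ r := by
  rw [load, if_pos hr]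
  exact le_add_of_nonneg_left (by split_ifs <;> simp [h₁])

theorem load_of_notMem_of_mem (hr₁ : r ∉ a₁) (hr₂ : r ∈ a₂) : G.load a₁ a₂ r = w₂ := by
  simp [load, hr₁, hr₂]

theorem load_nonneg (h₁ : 0 ≤ w₁) (h₂ : 0 ≤ w₂) : 0 ≤ G.load a₁ a₂ r := by
  unfold load
  positivity

end Load

section Swap

/-- The same game with the roles of the two players exchanged, used to assume `w₂ ≤ w₁` without
loss of generality. Reducible, so that actions of `G` are actions of `G.swap`. -/
abbrev swap : CGame w₂ w₁ where
  n := G.n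
  A1 := G.A2
  A2 := G.A1
  A1_nonempty := G.A2_nonempty
  A2_nonempty := G.A1_nonempty
  α := G.α
  β := G.β
  α_nonneg := G.α_nonneg
  β_nonneg := G.β_nonneg

theorem load_swap (r : Fin G.n) : G.swap.load a₂ a₁ r = G.load a₁ a₂ r :=
  add_comm _ _

theorem C1uni_swap : G.swap.C1uni a₂ a₁ = G.C2uni a₁ a₂ :=
  sum_congr rfl fun r _ => by rw [load_swap]

theorem C2uni_swap : G.swap.C2uni a₂ a₁ = G.C1uni a₁ a₂ :=
  sum_congr rfl fun r _ => by rw [load_swap]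

theorem Cuni_swap : G.swap.Cuni a₂ a₁ = G.Cuni a₁ a₂ := by
  rw [Cuni, C1uni_swap, C2uni_swap, Cuni, add_comm]

variable {G a₁ a₂}

theorem IsProfile.swap (h : G.IsProfile a₁ a₂) : G.swap.IsProfile a₂ a₁ :=
  And.symm h

theorem IsNashUni.swap (h : G.IsNashUni a₁ a₂) : G.swap.IsNashUni a₂ a₁ := by
  obtain ⟨hprofile, hbest₁, hbest₂⟩ := h
  refine ⟨hprofile.swap, fun b₂ hb₂ => ?_, fun b₁ hb₁ => ?_⟩
  · simpa only [C1uni_swap] using hbest₂ b₂ hb₂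
  · simpa only [C2uni_swap] using hbest₁ b₁ hb₁

end Swap

section Smoothness

theorem mul_C1uni_le_mul_C1uni (h₁ : 0 ≤ w₁) (h₂ : 0 ≤ w₂) :
    w₁ * G.C1uni b₁ a₂ ≤ (w₁ + w₂) * G.C1uni b₁ b₂ := by
  simp only [C1uni_eq_sum_latency, mul_sum]
  refine sum_le_sum fun r hr => ?_
  calc w₁ * G.latency r (G.load b₁ a₂ r)
      ≤ w₁ * G.latency r (w₁ + w₂) := by
        gcongr
        exact G.latency_mono r (G.load_le_add h₁ h₂)
    _ ≤ (w₁ + w₂) * G.latency r w₁ :=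
        G.mul_latency_le_mul_latency r (le_add_of_nonneg_right h₂)
    _ ≤ (w₁ + w₂) * G.latency r (G.load b₁ b₂ r) := by
        gcongr
        exact G.latency_mono r (G.left_le_load h₂ hr)

theorem mul_latency_load_le_mul_add (h₂ : 0 ≤ w₂) (h : w₂ ≤ w₁) (hr : r ∈ b₂) :
    (w₁ ^ 2 + w₁ * w₂ + w₂ ^ 2) * G.latency r (G.load a₁ b₂ r) ≤
      (w₁ + w₂) * ((2 * w₁ + w₂) * G.latency r (G.load b₁ b₂ r) +
        (w₁ - w₂) * if r ∈ a₁ then G.latency r (G.load a₁ a₂ r) else 0) := by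
  have h₁ : 0 ≤ w₁ := h₂.trans h
  have : 0 ≤ w₁ - w₂ := sub_nonneg.2 h
  have hB : G.latency r w₂ ≤ G.latency r (G.load b₁ b₂ r) :=
    G.latency_mono r (G.right_le_load h₁ hr)
  split_ifs with ha
  · have hdev : G.latency r (G.load a₁ b₂ r) ≤ G.latency r (w₁ + w₂) :=
      G.latency_mono r (G.load_le_add h₁ h₂)
    have hA : G.latency r w₁ ≤ G.latency r (G.load a₁ a₂ r) :=
      G.latency_mono r (G.left_le_load h₂ ha)
    calc (w₁ ^ 2 + w₁ * w₂ + w₂ ^ 2) * G.latency r (G.load a₁ b₂ r)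
        ≤ (w₁ ^ 2 + w₁ * w₂ + w₂ ^ 2) * G.latency r (w₁ + w₂) := by gcongr
      _ ≤ (w₁ + w₂) * ((2 * w₁ + w₂) * G.latency r w₂ + (w₁ - w₂) * G.latency r w₁) :=
          G.mul_latency_add_le h₂ h r
      _ ≤ _ := by gcongr
  · have hcoeff : w₁ ^ 2 + w₁ * w₂ + w₂ ^ 2 ≤ (w₁ + w₂) * (2 * w₁ + w₂) := by
      have hdiff : 0 ≤ w₁ * (w₁ + 2 * w₂) := by positivity
      linear_combination hdiff
    rw [G.load_of_notMem_of_mem ha hr, mul_zero, add_zero, ← mul_assoc]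
    have := G.latency_nonneg r h₂
    gcongr

theorem mul_C2uni_le_mul_add (h₂ : 0 ≤ w₂) (h : w₂ ≤ w₁) :
    (w₁ ^ 2 + w₁ * w₂ + w₂ ^ 2) * G.C2uni a₁ b₂ ≤
      (w₁ + w₂) * ((2 * w₁ + w₂) * G.C2uni b₁ b₂ + (w₁ - w₂) * G.C1uni a₁ a₂) := by
  have h₁ : 0 ≤ w₁ := h₂.trans h
  have : 0 ≤ w₁ - w₂ := sub_nonneg.2 h
  have hshared : ∑ r ∈ b₂, (if r ∈ a₁ then G.latency r (G.load a₁ a₂ r) else 0) ≤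
      G.C1uni a₁ a₂ := by
    rw [sum_ite_mem, C1uni_eq_sum_latency]
    exact sum_le_sum_of_subset_of_nonneg inter_subset_right fun r _ _ =>
      G.latency_nonneg r (G.load_nonneg h₁ h₂)
  calc (w₁ ^ 2 + w₁ * w₂ + w₂ ^ 2) * G.C2uni a₁ b₂
      ≤ (w₁ + w₂) * ((2 * w₁ + w₂) * G.C2uni b₁ b₂ +
          (w₁ - w₂) * ∑ r ∈ b₂, if r ∈ a₁ then G.latency r (G.load a₁ a₂ r) else 0) := by
        simp only [C2uni_eq_sum_latency, mul_sum, ← sum_add_distrib]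
        exact sum_le_sum fun r hr => G.mul_latency_load_le_mul_add a₁ a₂ b₁ b₂ h₂ h hr
    _ ≤ _ := by gcongr

end Smoothness

section PriceOfAnarchy

variable {G a₁ a₂ b₁ b₂}

theorem IsNashUni.mul_Cuni_le_of_le (hA : G.IsNashUni a₁ a₂) (hB : G.IsProfile b₁ b₂)
    (h₂ : 0 ≤ w₂) (h : w₂ ≤ w₁) :
    (w₁ ^ 2 + w₁ * w₂ + w₂ ^ 2) * G.Cuni a₁ a₂ ≤
      (w₁ + w₂) * (2 * w₁ + w₂) * G.Cuni b₁ b₂ := by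
  have h₁ : 0 ≤ w₁ := h₂.trans h
  have hbest₁ : G.C1uni a₁ a₂ ≤ G.C1uni b₁ a₂ := hA.2.1 b₁ hB.1
  have hbest₂ : G.C2uni a₁ a₂ ≤ G.C2uni a₁ b₂ := hA.2.2 b₂ hB.2
  have hdev₁ := G.mul_C1uni_le_mul_C1uni a₂ b₁ b₂ h₁ h₂
  have hdev₂ := G.mul_C2uni_le_mul_add a₁ a₂ b₁ b₂ h₂ h
  unfold Cuni
  linear_combination (w₁ * (2 * w₁ + w₂)) * hbest₁ + (w₁ ^ 2 + w₁ * w₂ + w₂ ^ 2) * hbest₂ +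
    (2 * w₁ + w₂) * hdev₁ + hdev₂

theorem IsNashUni.mul_Cuni_le (hA : G.IsNashUni a₁ a₂) (hB : G.IsProfile b₁ b₂)
    (h₁ : 0 ≤ w₁) (h₂ : 0 ≤ w₂) :
    (w₁ ^ 2 + w₁ * w₂ + w₂ ^ 2) * G.Cuni a₁ a₂ ≤
      (w₁ ^ 2 + w₁ * w₂ + w₂ ^ 2 + (2 * w₁ * w₂ + max w₁ w₂ ^ 2)) * G.Cuni b₁ b₂ := by
  rcases le_total w₂ w₁ with h | h
  · rw [max_eq_left h]
    linear_combination hA.mul_Cuni_le_of_le hB h₂ h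
  · have hswap := hA.swap.mul_Cuni_le_of_le hB.swap h₁ h
    rw [Cuni_swap, Cuni_swap] at hswap
    rw [max_eq_right h]
    linear_combination hswap

end PriceOfAnarchy

end CGame

/-- price of anarchy upper bound for simultaneous uniformly weighted
two-player congestion games with weights `w₁, w₂`. -/
theorem poa_sim_uniform_upper (w₁ w₂ : ℝ) (h₁ : 0 ≤ w₁) (h₂ : 0 ≤ w₂)
    (hsum : 0 < w₁ + w₂) (G : CGame w₁ w₂) (a₁ a₂ b₁ b₂ : Finset (Fin G.n))
    (hA : G.IsNashUni a₁ a₂) (hB : G.IsProfile b₁ b₂) :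
    G.Cuni a₁ a₂ ≤
      (1 + (2 * w₁ * w₂ + (max w₁ w₂) ^ 2) / (w₁ ^ 2 + w₁ * w₂ + w₂ ^ 2)) *
        G.Cuni b₁ b₂ := by
  have hD : 0 < w₁ ^ 2 + w₁ * w₂ + w₂ ^ 2 := by
    linear_combination (pow_pos hsum 2 + sq_nonneg w₁ + sq_nonneg w₂) / 2
  rw [one_add_div hD.ne', div_mul_eq_mul_div, le_div_iff₀' hD]
  exact hA.mul_Cuni_le hB h₁ h₂
end

section
/- Let w₁ ≥ w₂ > 0. There exist a weighted two-player congestion game with weights w₁, w₂ and uniform costs, a pure Nash equilibrium A, and an action profile B such that C(B) > 0 and C(A) = (1 + (w₁² + 2·w₁·w₂)/(w₁² + w₁·w₂ + w₂²)) · C(B). -/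
open Finset Real

/-! Two players hold each other's resource: exchanging the two would be better for both together,
but a player who moves alone ends up sharing. A surcharge on the second player's equilibrium action
worsens the equilibrium without affecting the exchanged profile, and the ratio is largest when both
players are exactly indifferent between staying and moving alone. -/

namespace CGame

section Cost

variable {w₁ w₂ : ℝ} {G : CGame w₁ w₂} {a₁ a₂ : Finset (Fin G.n)}

theorem C1uni_of_disjoint (h : Disjoint a₁ a₂) :
    G.C1uni a₁ a₂ = ∑ r ∈ a₁, (G.α r + G.β r * w₁) :=
  sum_congr rfl fun r hr ↦ by
    rw [load, if_pos hr, if_neg (disjoint_left.mp h hr), add_zero]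

theorem C2uni_of_disjoint (h : Disjoint a₁ a₂) :
    G.C2uni a₁ a₂ = ∑ r ∈ a₂, (G.α r + G.β r * w₂) :=
  sum_congr rfl fun r hr ↦ by
    rw [load, if_neg (disjoint_right.mp h hr), if_pos hr, zero_add]

theorem C1uni_of_subset (h : a₁ ⊆ a₂) :
    G.C1uni a₁ a₂ = ∑ r ∈ a₁, (G.α r + G.β r * (w₁ + w₂)) :=
  sum_congr rfl fun r hr ↦ by rw [load, if_pos hr, if_pos (h hr)]

theorem C2uni_of_superset (h : a₂ ⊆ a₁) :
    G.C2uni a₁ a₂ = ∑ r ∈ a₂, (G.α r + G.β r * (w₁ + w₂)) :=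
  sum_congr rfl fun r hr ↦ by rw [load, if_pos (h hr), if_pos hr]

theorem isNashUni_iff_of_pair {b₁ b₂ : Finset (Fin G.n)} (h₁ : G.A1 = {a₁, b₁})
    (h₂ : G.A2 = {a₂, b₂}) :
    G.IsNashUni a₁ a₂ ↔
      G.C1uni a₁ a₂ ≤ G.C1uni b₁ a₂ ∧ G.C2uni a₁ a₂ ≤ G.C2uni a₁ b₂ := by
  simp [IsNashUni, IsProfile, h₁, h₂]

end Cost

section ExchangeGame

variable (w₁ w₂ : ℝ) {x y z : ℝ} (hx : 0 ≤ x) (hy : 0 ≤ y) (hz : 0 ≤ z)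

/-- The game in which two players exchange two congestible resources: player 1 chooses resource `1`
or `0`, player 2 resource `0` or `1`, where `x` and `y` are the slopes of resources `0` and `1`.
The private resource `2` of constant cost `z` is a surcharge for player 2 on choosing `0`. -/
abbrev exchangeGame : CGame w₁ w₂ where
  n := 3
  A1 := {{1}, {0}}
  A2 := {{0, 2}, {1}}
  A1_nonempty := insert_nonempty _ _
  A2_nonempty := insert_nonempty _ _
  α := ![0, 0, z]
  β := ![x, y, 0]
  α_nonneg := by simp [Fin.forall_fin_succ, hz]
  β_nonneg := by simp [Fin.forall_fin_succ, hx, hy]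

theorem exchangeGame_isNashUni_iff :
    (exchangeGame w₁ w₂ hx hy hz).IsNashUni {1} {0, 2} ↔
      y * w₁ ≤ x * (w₁ + w₂) ∧ x * w₂ + z ≤ y * (w₁ + w₂) := by
  have equilibrium_disjoint : Disjoint ({1} : Finset (Fin 3)) {0, 2} := by decide
  have deviation_subset : ({0} : Finset (Fin 3)) ⊆ {0, 2} := by decide
  rw [isNashUni_iff_of_pair (G := exchangeGame w₁ w₂ hx hy hz) rfl rfl,
    C1uni_of_disjoint equilibrium_disjoint, C2uni_of_disjoint equilibrium_disjoint,
    C1uni_of_subset deviation_subset, C2uni_of_superset subset_rfl]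
  simp [exchangeGame]

theorem exchangeGame_Cuni_equilibrium :
    (exchangeGame w₁ w₂ hx hy hz).Cuni {1} {0, 2} = y * w₁ + (x * w₂ + z) := by
  have hdisj : Disjoint ({1} : Finset (Fin 3)) {0, 2} := by decide
  rw [Cuni, C1uni_of_disjoint hdisj, C2uni_of_disjoint hdisj]
  simp [exchangeGame]

theorem exchangeGame_Cuni_exchanged :
    (exchangeGame w₁ w₂ hx hy hz).Cuni {0} {1} = x * w₁ + y * w₂ := by
  have hdisj : Disjoint ({0} : Finset (Fin 3)) {1} := by decide
  rw [Cuni, C1uni_of_disjoint hdisj, C2uni_of_disjoint hdisj]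
  simp

end ExchangeGame

end CGame

open CGame in
theorem poa_sim_uniform_lower_general (w₁ w₂ : ℝ) (h₁ : 0 ≤ w₁) (hw : 0 < w₁ + w₂) :
    ∃ (G : CGame w₁ w₂) (a₁ a₂ b₁ b₂ : Finset (Fin G.n)),
      G.IsNashUni a₁ a₂ ∧ G.IsProfile b₁ b₂ ∧ 0 < G.Cuni b₁ b₂ ∧
      G.Cuni a₁ a₂ =
        (1 + (w₁ ^ 2 + 2 * w₁ * w₂) / (w₁ ^ 2 + w₁ * w₂ + w₂ ^ 2)) *
          G.Cuni b₁ b₂ := by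
  have hD : 0 < w₁ ^ 2 + w₁ * w₂ + w₂ ^ 2 := by
    linarith [pow_pos hw 2, sq_nonneg w₁, sq_nonneg w₂, add_sq w₁ w₂]
  -- These slopes and this surcharge turn both equilibrium conditions into equalities.
  let G := exchangeGame w₁ w₂ h₁ hw.le hD.le
  have hopt : G.Cuni {0} {1} = w₁ ^ 2 + w₁ * w₂ + w₂ ^ 2 :=
    (exchangeGame_Cuni_exchanged w₁ w₂ h₁ hw.le hD.le).trans (by ring)
  refine ⟨G, {1}, {0, 2}, {0}, {1}, (exchangeGame_isNashUni_iff ..).mpr ⟨?_, ?_⟩, ?_, hopt ▸ hD, ?_⟩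
  · exact (mul_comm _ _).le
  · exact le_of_eq (by ring)
  · exact ⟨mem_insert_of_mem (mem_singleton_self _), mem_insert_of_mem (mem_singleton_self _)⟩
  · rw [hopt, one_add_div hD.ne', div_mul_cancel₀ _ hD.ne', exchangeGame_Cuni_equilibrium]
    ring

/-- matching lower-bound instance for simultaneous uniformly weighted
two-player congestion games, case `w₁ ≥ w₂ > 0`. -/
theorem poa_sim_uniform_lower (w₁ w₂ : ℝ) (h₂ : 0 < w₂) (h : w₂ ≤ w₁) :
    ∃ (G : CGame w₁ w₂) (a₁ a₂ b₁ b₂ : Finset (Fin G.n)),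
      G.IsNashUni a₁ a₂ ∧ G.IsProfile b₁ b₂ ∧ 0 < G.Cuni b₁ b₂ ∧
      G.Cuni a₁ a₂ =
        (1 + (w₁ ^ 2 + 2 * w₁ * w₂) / (w₁ ^ 2 + w₁ * w₂ + w₂ ^ 2)) *
          G.Cuni b₁ b₂ := by
  have h₁ : 0 < w₁ := h₂.trans_le h
  exact poa_sim_uniform_lower_general w₁ w₂ h₁.le (add_pos h₁ h₂)
end

section
/- For all real numbers w₁, w₂ ≥ 0 with w₁ + w₂ > 0, it holds that 1 + (2·w₁·w₂ + max(w₁,w₂)²)/(w₁² + w₁·w₂ + w₂²) ≤ 1 + 2/√3, with equality if and only if w₁ = (1 + √3)·w₂ or w₂ = (1 + √3)·w₁. -/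
open Finset Real

/-! Write `x` and `y` for the larger and the smaller weight. The quadratic form
`2 (x ^ 2 + x y + y ^ 2) - √3 (2 x y + x ^ 2)` is degenerate: it is a positive multiple of the
square of `x - (1 + √3) y`. The square gives the bound, its zero line the extremal weight ratio. -/

lemma sq_add_mul_add_sq_pos {R : Type*} [CommRing R] [LinearOrder R] [IsStrictOrderedRing R]
    {x y : R} (h : x ≠ 0 ∨ y ≠ 0) : 0 < x ^ 2 + x * y + y ^ 2 := by
  have hsq : 0 < x ^ 2 + y ^ 2 := by
    rcases h with hx | hy <;> positivity
  nlinarith [sq_nonneg (x + y)]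

lemma max_eq_mul_min_iff {R : Type*} [Semiring R] [LinearOrder R] [IsStrictOrderedRing R]
    {a b c : R} (hc : 1 < c) (hab : 0 < a + b) :
    max a b = c * min a b ↔ a = c * b ∨ b = c * a := by
  wlog hba : b ≤ a generalizing a b
  · rw [max_comm, min_comm, or_comm]
    exact this (by rwa [add_comm]) (le_of_not_ge hba)
  rw [max_eq_left hba, min_eq_right hba]
  have ha : 0 < a := by
    by_contra! ha
    exact hab.not_ge (add_nonpos ha (hba.trans ha))
  have hb : b ≠ c * a := (hba.trans_lt (lt_mul_of_one_lt_left ha hc)).ne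
  exact (or_iff_left hb).symm

lemma two_sub_sqrt_three_pos : 0 < 2 - √3 :=
  sub_pos.2 ((Real.sqrt_lt' two_pos).2 (by norm_num))

lemma two_mul_sub_mul_sqrt_three_eq (x y : ℝ) :
    2 * (x ^ 2 + x * y + y ^ 2) - (2 * x * y + x ^ 2) * √3 =
      (2 - √3) * (x - (1 + √3) * y) ^ 2 := by
  have hs : √3 ^ 2 = 3 := Real.sq_sqrt zero_le_three
  linear_combination (y ^ 2 * √3 - 2 * x * y) * hs

lemma div_le_two_div_sqrt_three {x y : ℝ} (hD : 0 < x ^ 2 + x * y + y ^ 2) :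
    (2 * x * y + x ^ 2) / (x ^ 2 + x * y + y ^ 2) ≤ 2 / √3 := by
  rw [div_le_div_iff₀ hD (by positivity), ← sub_nonneg, two_mul_sub_mul_sqrt_three_eq]
  exact mul_nonneg two_sub_sqrt_three_pos.le (sq_nonneg _)

lemma div_eq_two_div_sqrt_three_iff {x y : ℝ} (hD : x ^ 2 + x * y + y ^ 2 ≠ 0) :
    (2 * x * y + x ^ 2) / (x ^ 2 + x * y + y ^ 2) = 2 / √3 ↔ x = (1 + √3) * y := by
  rw [div_eq_div_iff hD (by positivity), eq_comm, ← sub_eq_zero, two_mul_sub_mul_sqrt_three_eq,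
    mul_eq_zero, or_iff_right two_sub_sqrt_three_pos.ne', sq_eq_zero_iff, sub_eq_zero]

theorem poa_sim_uniform_sup_general (w₁ w₂ : ℝ) (hw : w₁ ≠ 0 ∨ w₂ ≠ 0) :
    1 + (2 * w₁ * w₂ + (max w₁ w₂) ^ 2) / (w₁ ^ 2 + w₁ * w₂ + w₂ ^ 2) ≤ 1 + 2 / √3 ∧
    (1 + (2 * w₁ * w₂ + (max w₁ w₂) ^ 2) / (w₁ ^ 2 + w₁ * w₂ + w₂ ^ 2) = 1 + 2 / √3 ↔
      max w₁ w₂ = (1 + √3) * min w₁ w₂) := by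
  have hprod : max w₁ w₂ * min w₁ w₂ = w₁ * w₂ := max_mul_min w₁ w₂
  have hnum : 2 * w₁ * w₂ = 2 * max w₁ w₂ * min w₁ w₂ := by linear_combination -2 * hprod
  have hden : w₁ ^ 2 + w₁ * w₂ + w₂ ^ 2 =
      (max w₁ w₂) ^ 2 + max w₁ w₂ * min w₁ w₂ + (min w₁ w₂) ^ 2 := by
    linear_combination hprod - (w₁ + w₂ + max w₁ w₂ + min w₁ w₂) * max_add_min w₁ w₂
  have hpos := sq_add_mul_add_sq_pos hw
  rw [hden] at hpos
  rw [add_le_add_iff_left, add_right_inj, hnum, hden]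
  exact ⟨div_le_two_div_sqrt_three hpos, div_eq_two_div_sqrt_three_iff hpos.ne'⟩

/-- the parametric bound is maximized at weight ratio `1 + √3`,
with maximal value `1 + 2/√3`. -/
theorem poa_sim_uniform_sup (w₁ w₂ : ℝ) (h₁ : 0 ≤ w₁) (h₂ : 0 ≤ w₂)
    (hsum : 0 < w₁ + w₂) :
    1 + (2 * w₁ * w₂ + (max w₁ w₂) ^ 2) / (w₁ ^ 2 + w₁ * w₂ + w₂ ^ 2) ≤
      1 + 2 / Real.sqrt 3 ∧
    (1 + (2 * w₁ * w₂ + (max w₁ w₂) ^ 2) / (w₁ ^ 2 + w₁ * w₂ + w₂ ^ 2) =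
        1 + 2 / Real.sqrt 3 ↔
      w₁ = (1 + Real.sqrt 3) * w₂ ∨ w₂ = (1 + Real.sqrt 3) * w₁) := by
  rw [← max_eq_mul_min_iff (lt_add_of_pos_right 1 (by positivity)) hsum]
  exact poa_sim_uniform_sup_general w₁ w₂ (not_and_or.1 fun ⟨h, h'⟩ => by simp [h, h'] at hsum)
end

section
/- Let w₁, w₂ ≥ 0 with w₁ + w₂ > 0. In every weighted two-player congestion game with weights w₁, w₂ and proportional costs, every pure Nash equilibrium A and every action profile B satisfy C(A) ≤ (1 + w₁·w₂·(w₁ + w₂ + max(w₁,w₂))/(w₁³ + w₂³ + w₁·w₂·min(w₁,w₂))) · C(B). -/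
open Finset Real

/-!
The equilibrium conditions of the two players, taken with different nonnegative multipliers `μ₁` and
`μ₂`, are added to `δ` times the social cost of the equilibrium. The sum is then compared with `κ`
times the social cost of the other profile on each resource separately, which gives the ratio
`κ / δ`. The cost of a resource is affine in each of the four 0-1 variables telling which player
uses it in which profile, so the comparison can be made for variables in the whole interval
`[0, 1]`.
-/

namespace CGame

/-- The proportional cost that a resource with coefficients `α`, `β` causes to a player of weight
`w` who uses it to the extent `x`, while an opponent of weight `w'` uses it to the extent `y`. Since
`x ^ 2 = x` for `x ∈ {0, 1}`, the player's own load is entered as `w` rather than `w * x`, which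
makes the share linear in `x`. -/
def costShare (w w' α β x y : ℝ) : ℝ :=
  w * x * (α + β * (w + w' * y))

/-- Smoothness of two-player games with multipliers that depend on the player: a bound on each
resource, used to the extents `p`, `q` by the two players in an equilibrium and `s`, `t` in another
profile. The brackets after `μ₁` and `μ₂` are the changes of cost under unilateral deviations. -/
def IsSmooth (w₁ w₂ δ μ₁ μ₂ κ : ℝ) : Prop :=
  ∀ ⦃α β p q s t : ℝ⦄, 0 ≤ α → 0 ≤ β → p ∈ Set.Icc (0 : ℝ) 1 → q ∈ Set.Icc (0 : ℝ) 1 →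
    s ∈ Set.Icc (0 : ℝ) 1 → t ∈ Set.Icc (0 : ℝ) 1 →
    δ * (costShare w₁ w₂ α β p q + costShare w₂ w₁ α β q p) +
        μ₁ * (costShare w₁ w₂ α β s q - costShare w₁ w₂ α β p q) +
        μ₂ * (costShare w₂ w₁ α β t p - costShare w₂ w₁ α β q p) ≤
      κ * (costShare w₁ w₂ α β s t + costShare w₂ w₁ α β t s)

/-- The 0-1 variable telling whether an action uses a resource, as an extent for `costShare`. -/
def usage {ι : Type*} [DecidableEq ι] (a : Finset ι) (r : ι) : ℝ :=
  if r ∈ a then 1 else 0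

lemma usage_mem_Icc {ι : Type*} [DecidableEq ι] (a : Finset ι) (r : ι) :
    usage a r ∈ Set.Icc (0 : ℝ) 1 := by
  unfold usage
  split_ifs <;> simp

section Smoothness

variable {w₁ w₂ δ μ₁ μ₂ κ : ℝ}

lemma C1prop_eq_sum_costShare (G : CGame w₁ w₂) (a₁ a₂ : Finset (Fin G.n)) :
    G.C1prop a₁ a₂ = ∑ r, costShare w₁ w₂ (G.α r) (G.β r) (usage a₁ r) (usage a₂ r) := by
  rw [C1prop, Finset.mul_sum, ← Finset.sum_subset (Finset.subset_univ a₁)]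
  · refine Finset.sum_congr rfl fun r hr => ?_
    simp [costShare, usage, load, hr]
  · intro r _ hr
    simp [costShare, usage, hr]

lemma C2prop_eq_sum_costShare (G : CGame w₁ w₂) (a₁ a₂ : Finset (Fin G.n)) :
    G.C2prop a₁ a₂ = ∑ r, costShare w₂ w₁ (G.α r) (G.β r) (usage a₂ r) (usage a₁ r) := by
  rw [C2prop, Finset.mul_sum, ← Finset.sum_subset (Finset.subset_univ a₂)]
  · refine Finset.sum_congr rfl fun r hr => ?_
    simp [costShare, usage, load, hr, add_comm]
  · intro r _ hr
    simp [costShare, usage, hr]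

lemma IsSmooth.symm (h : IsSmooth w₁ w₂ δ μ₁ μ₂ κ) : IsSmooth w₂ w₁ δ μ₂ μ₁ κ := by
  intro α β p q s t hα hβ hp hq hs ht
  linarith [h hα hβ hq hp ht hs]

theorem IsSmooth.mul_Cprop_le (h : IsSmooth w₁ w₂ δ μ₁ μ₂ κ) (hμ₁ : 0 ≤ μ₁) (hμ₂ : 0 ≤ μ₂)
    {G : CGame w₁ w₂} {a₁ a₂ b₁ b₂ : Finset (Fin G.n)} (hA : G.IsNashProp a₁ a₂)
    (hB : G.IsProfile b₁ b₂) : δ * G.Cprop a₁ a₂ ≤ κ * G.Cprop b₁ b₂ := by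
  obtain ⟨-, hNash₁, hNash₂⟩ := hA
  have hdev₁ : 0 ≤ μ₁ * (G.C1prop b₁ a₂ - G.C1prop a₁ a₂) :=
    mul_nonneg hμ₁ (sub_nonneg.2 (hNash₁ b₁ hB.1))
  have hdev₂ : 0 ≤ μ₂ * (G.C2prop a₁ b₂ - G.C2prop a₁ a₂) :=
    mul_nonneg hμ₂ (sub_nonneg.2 (hNash₂ b₂ hB.2))
  calc δ * G.Cprop a₁ a₂
      ≤ δ * G.Cprop a₁ a₂ + μ₁ * (G.C1prop b₁ a₂ - G.C1prop a₁ a₂) +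
          μ₂ * (G.C2prop a₁ b₂ - G.C2prop a₁ a₂) := by linarith
    _ ≤ κ * G.Cprop b₁ b₂ := by
      simp only [Cprop, C1prop_eq_sum_costShare, C2prop_eq_sum_costShare,
        ← Finset.sum_add_distrib, ← Finset.sum_sub_distrib, Finset.mul_sum]
      exact Finset.sum_le_sum fun r _ => h (G.α_nonneg r) (G.β_nonneg r) (usage_mem_Icc a₁ r)
        (usage_mem_Icc a₂ r) (usage_mem_Icc b₁ r) (usage_mem_Icc b₂ r)

end Smoothness

section Multipliers

variable {w₁ w₂ : ℝ}

/-- Up to scaling, the multipliers are the solution of `μ₂ = δ`, `κ * w₁ = μ₁ * (w₁ + w₂)` and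
`(κ - δ) * w₂ ^ 2 + (μ₁ - δ) * w₁ ^ 2 = δ * w₁ * w₂`. For `α = 0` these equations make the bound
tight where exactly `q`, exactly `q` and `s`, or exactly `p` and `t` are `1` and the rest `0`. -/
theorem isSmooth_of_le (h₂ : 0 ≤ w₂) (hle : w₂ ≤ w₁) :
    IsSmooth w₁ w₂ (w₁ ^ 3 + w₂ ^ 3 + w₁ * w₂ ^ 2) (w₁ * (w₁ ^ 2 + w₁ * w₂ + w₂ ^ 2))
      (w₁ ^ 3 + w₂ ^ 3 + w₁ * w₂ ^ 2) ((w₁ + w₂) * (w₁ ^ 2 + w₁ * w₂ + w₂ ^ 2)) := by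
  rintro α β p q s t hα hβ ⟨hp, hp'⟩ ⟨hq, hq'⟩ ⟨hs, -⟩ ⟨ht, ht'⟩
  have h₁ : 0 ≤ w₁ := h₂.trans hle
  have hsq : 0 ≤ w₁ ^ 2 - w₂ ^ 2 := sub_nonneg.2 (pow_le_pow_left₀ h₂ hle 2)
  rw [← sub_nonneg] at hp' hq' ht'
  have hconst : 0 ≤ (w₁ ^ 2 + w₁ * w₂ + w₂ ^ 2) * s + w₂ * (2 * w₁ + w₂) * t +
      (w₁ ^ 2 - w₂ ^ 2) * p := by positivity
  have hlin : 0 ≤ w₁ * (w₁ ^ 2 + w₁ * w₂ + w₂ ^ 2) * (s * (1 - q)) +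
      2 * (w₁ + w₂) * (w₁ ^ 2 + w₁ * w₂ + w₂ ^ 2) * (s * t) + w₂ * (w₁ ^ 2 - w₂ ^ 2) * (p * q) +
      w₂ ^ 2 * (2 * w₁ + w₂) * (t * (1 - p)) + w₁ * (w₁ ^ 2 - w₂ ^ 2) * (p * (1 - t)) := by
    positivity
  have hslack := mul_nonneg (mul_nonneg h₁ h₂) (add_nonneg (mul_nonneg hα hconst)
    (mul_nonneg hβ hlin))
  rw [← sub_nonneg]
  refine hslack.trans_eq ?_
  unfold costShare
  ring

theorem exists_isSmooth (h₁ : 0 ≤ w₁) (h₂ : 0 ≤ w₂) :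
    ∃ μ₁ ≥ 0, ∃ μ₂ ≥ 0, IsSmooth w₁ w₂ (w₁ ^ 3 + w₂ ^ 3 + w₁ * w₂ * min w₁ w₂) μ₁ μ₂
      (w₁ ^ 3 + w₂ ^ 3 + w₁ * w₂ * min w₁ w₂ + w₁ * w₂ * (w₁ + w₂ + max w₁ w₂)) := by
  wlog hle : w₂ ≤ w₁ generalizing w₁ w₂
  · obtain ⟨μ₂, hμ₂, μ₁, hμ₁, h⟩ := this h₂ h₁ (le_of_not_ge hle)
    refine ⟨μ₁, hμ₁, μ₂, hμ₂, ?_⟩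
    simpa only [min_comm w₂, max_comm w₂, add_comm (w₂ ^ 3), add_comm w₂, mul_comm w₂] using h.symm
  · refine ⟨w₁ * (w₁ ^ 2 + w₁ * w₂ + w₂ ^ 2), by positivity, w₁ ^ 3 + w₂ ^ 3 + w₁ * w₂ ^ 2,
      by positivity, ?_⟩
    rw [min_eq_right hle, max_eq_left hle]
    convert isSmooth_of_le h₂ hle using 1 <;> ring

end Multipliers

end CGame

/-- price of anarchy upper bound for simultaneous proportionally
weighted two-player congestion games with weights `w₁, w₂`. -/
theorem poa_sim_prop_upper (w₁ w₂ : ℝ) (h₁ : 0 ≤ w₁) (h₂ : 0 ≤ w₂)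
    (hsum : 0 < w₁ + w₂) (G : CGame w₁ w₂) (a₁ a₂ b₁ b₂ : Finset (Fin G.n))
    (hA : G.IsNashProp a₁ a₂) (hB : G.IsProfile b₁ b₂) :
    G.Cprop a₁ a₂ ≤
      (1 + w₁ * w₂ * (w₁ + w₂ + max w₁ w₂) /
        (w₁ ^ 3 + w₂ ^ 3 + w₁ * w₂ * min w₁ w₂)) * G.Cprop b₁ b₂ := by
  obtain ⟨μ₁, hμ₁, μ₂, hμ₂, hsmooth⟩ := CGame.exists_isSmooth h₁ h₂
  have hcubes : 0 < w₁ ^ 3 + w₂ ^ 3 :=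
    pos_of_mul_pos_right ((pow_pos hsum 3).trans_le (add_pow_le h₁ h₂ 3)) (by positivity)
  have hδ : 0 < w₁ ^ 3 + w₂ ^ 3 + w₁ * w₂ * min w₁ w₂ := by positivity
  rw [one_add_div hδ.ne', div_mul_eq_mul_div, le_div_iff₀' hδ]
  exact hsmooth.mul_Cprop_le hμ₁ hμ₂ hA hB
end

section
/- Let w₁ ≥ w₂ > 0. There exist a weighted two-player congestion game with weights w₁, w₂ and proportional costs, a pure Nash equilibrium A, and an action profile B such that C(B) > 0 and C(A) = (1 + w₁·w₂·(2·w₁ + w₂)/(w₁³ + w₁·w₂² + w₂³)) · C(B). -/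
open Finset Real

/-!
Each player chooses between two actions built from three resources: resource `0` has constant cost
`a`, resources `1` and `2` have costs `b * x` and `c * x`. In the bad profile player 1 sits on
resource `2` and player 2 uses resources `0` and `1`; in the good profile player 1 uses resource `1`
and player 2 resource `2`. Player 1 is indifferent to deviating from the bad profile if
`c * w₁ = b * (w₁ + w₂)`, which suggests `b = w₁`, `c = w₁ + w₂`; the largest `a` that player 2
then tolerates satisfies `a + b * w₂ = c * (w₁ + w₂)`, that is, `a = w₁ ^ 2 + w₁ * w₂ + w₂ ^ 2`.
-/

namespace CGame

variable {w₁ w₂ : ℝ}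

theorem isNashProp_iff_of_eq_pair {G : CGame w₁ w₂} {a₁ a₂ b₁ b₂ : Finset (Fin G.n)}
    (hA₁ : G.A1 = {a₁, b₁}) (hA₂ : G.A2 = {a₂, b₂}) :
    G.IsNashProp a₁ a₂ ↔
      G.C1prop a₁ a₂ ≤ G.C1prop b₁ a₂ ∧ G.C2prop a₁ a₂ ≤ G.C2prop a₁ b₂ := by
  simp [IsNashProp, IsProfile, hA₁, hA₂]

/-- The game on three resources with costs `a`, `b * x` and `c * x` at load `x`, in which player 1
chooses between `{2}` and `{1}`, and player 2 between `{0, 1}` and `{2}`. It is reducible so that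
numerals denote resources. -/
abbrev threeResourceGame (w₁ w₂ : ℝ) {a b c : ℝ} (ha : 0 ≤ a) (hb : 0 ≤ b) (hc : 0 ≤ c) :
    CGame w₁ w₂ where
  n := 3
  A1 := {{2}, {1}}
  A2 := {{0, 1}, {2}}
  A1_nonempty := insert_nonempty _ _
  A2_nonempty := insert_nonempty _ _
  α := ![a, 0, 0]
  β := ![0, b, c]
  α_nonneg := by simp [Fin.forall_fin_succ, ha]
  β_nonneg := by simp [Fin.forall_fin_succ, hb, hc]

namespace threeResourceGame

variable {a b c : ℝ} (ha : 0 ≤ a) (hb : 0 ≤ b) (hc : 0 ≤ c)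

theorem isNashProp_bad (h₁ : 0 ≤ w₁) (h₂ : 0 ≤ w₂)
    (hdev₁ : c * w₁ ≤ b * (w₁ + w₂)) (hdev₂ : a + b * w₂ ≤ c * (w₁ + w₂)) :
    (threeResourceGame w₁ w₂ ha hb hc).IsNashProp {2} {0, 1} := by
  refine (isNashProp_iff_of_eq_pair rfl rfl).2 ⟨?_, ?_⟩
  · simpa [C1prop, load] using mul_le_mul_of_nonneg_left hdev₁ h₁
  · simpa [C2prop, load] using mul_le_mul_of_nonneg_left hdev₂ h₂

theorem isProfile_good : (threeResourceGame w₁ w₂ ha hb hc).IsProfile {1} {2} := by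
  simp [IsProfile]

theorem cprop_bad :
    (threeResourceGame w₁ w₂ ha hb hc).Cprop {2} {0, 1} =
      w₁ * (c * w₁) + w₂ * (a + b * w₂) := by
  simp [Cprop, C1prop, C2prop, load]

theorem cprop_good :
    (threeResourceGame w₁ w₂ ha hb hc).Cprop {1} {2} = w₁ * (b * w₁) + w₂ * (c * w₂) := by
  simp [Cprop, C1prop, C2prop, load]

end threeResourceGame

end CGame

open CGame in
theorem poa_sim_prop_lower_general (w₁ w₂ : ℝ) (h₁ : 0 ≤ w₁) (h₂ : 0 ≤ w₂) (hw : 0 < w₁ + w₂) :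
    ∃ (G : CGame w₁ w₂) (a₁ a₂ b₁ b₂ : Finset (Fin G.n)),
      G.IsNashProp a₁ a₂ ∧ G.IsProfile b₁ b₂ ∧ 0 < G.Cprop b₁ b₂ ∧
      G.Cprop a₁ a₂ =
        (1 + w₁ * w₂ * (2 * w₁ + w₂) / (w₁ ^ 3 + w₁ * w₂ ^ 2 + w₂ ^ 3)) *
          G.Cprop b₁ b₂ := by
  have ha : 0 ≤ w₁ ^ 2 + w₁ * w₂ + w₂ ^ 2 := by positivity
  have hcost : w₁ * (w₁ * w₁) + w₂ * ((w₁ + w₂) * w₂) = w₁ ^ 3 + w₁ * w₂ ^ 2 + w₂ ^ 3 := by ring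
  have hpos : 0 < w₁ ^ 3 + w₁ * w₂ ^ 2 + w₂ ^ 3 := by
    obtain rfl | h₁ := h₁.eq_or_lt
    · have : 0 < w₂ := by simpa using hw
      positivity
    · positivity
  refine ⟨threeResourceGame w₁ w₂ ha h₁ hw.le, {2}, {0, 1}, {1}, {2},
    threeResourceGame.isNashProp_bad _ _ _ h₁ h₂ (by linarith) (by linarith),
    threeResourceGame.isProfile_good .., ?_, ?_⟩
  · rwa [threeResourceGame.cprop_good, hcost]
  · rw [threeResourceGame.cprop_bad, threeResourceGame.cprop_good, hcost,
      one_add_mul, div_mul_cancel₀ _ hpos.ne']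
    ring

/-- matching lower-bound instance for simultaneous proportionally
weighted two-player congestion games, case `w₁ ≥ w₂ > 0`. -/
theorem poa_sim_prop_lower (w₁ w₂ : ℝ) (h₂ : 0 < w₂) (h : w₂ ≤ w₁) :
    ∃ (G : CGame w₁ w₂) (a₁ a₂ b₁ b₂ : Finset (Fin G.n)),
      G.IsNashProp a₁ a₂ ∧ G.IsProfile b₁ b₂ ∧ 0 < G.Cprop b₁ b₂ ∧
      G.Cprop a₁ a₂ =
        (1 + w₁ * w₂ * (2 * w₁ + w₂) / (w₁ ^ 3 + w₁ * w₂ ^ 2 + w₂ ^ 3)) *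
          G.Cprop b₁ b₂ :=
  poa_sim_prop_lower_general w₁ w₂ (h₂.le.trans h) h₂.le (add_pos (h₂.trans_le h) h₂)
end

section
/- Let w₁, w₂ > 0 with w₂ ≤ w₁ ≤ 2·w₂. There exist a symmetric weighted two-player congestion game with weights w₁, w₂ and uniform costs, a pure Nash equilibrium A, and an action profile B such that C(B) > 0 and C(A) = (3·(w₁ + w₂)³/(2·w₁³ + 5·w₁²·w₂ + 6·w₁·w₂² + 2·w₂³)) · C(B). -/
open Finset Real

/-!
At the equilibrium each player occupies one of two resources of slope `(w₁ + w₂) ^ 2` and one of two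
cheaper ones, and both share a fifth. The slopes are tuned so that each player is exactly
indifferent between this action and either action of the cheap profile, in which one player holds
both expensive resources and the other the remaining three, without any overlap. Copying the
opponent's action instead costs an extra `w₁ + w₂` times the slope of the shared resource.
-/

namespace CGame

section Cost

variable {w₁ w₂ : ℝ} (G : CGame w₁ w₂) (a₁ a₂ : Finset (Fin G.n))

theorem C1uni_eq_sum_add_sum_inter :
    G.C1uni a₁ a₂ = ∑ r ∈ a₁, (G.α r + G.β r * w₁) + ∑ r ∈ a₁ ∩ a₂, G.β r * w₂ := by
  rw [← filter_mem_eq_inter, sum_filter, ← sum_add_distrib]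
  refine sum_congr rfl fun r hr ↦ ?_
  simp only [load, if_pos hr, mul_add, mul_ite, mul_zero, add_assoc]

theorem C2uni_eq_sum_add_sum_inter :
    G.C2uni a₁ a₂ = ∑ r ∈ a₂, (G.α r + G.β r * w₂) + ∑ r ∈ a₁ ∩ a₂, G.β r * w₁ := by
  rw [inter_comm, ← filter_mem_eq_inter, sum_filter, ← sum_add_distrib]
  refine sum_congr rfl fun r hr ↦ ?_
  simp only [load, if_pos hr, mul_add, mul_ite, mul_zero]
  ring

end Cost

/-- The action of player 1 in the costly equilibrium of `tightGame`. -/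
def nashAction₁ : Finset (Fin 5) := {0, 3, 4}

/-- The action of player 2 in the costly equilibrium of `tightGame`. -/
def nashAction₂ : Finset (Fin 5) := {1, 2, 4}

/-- The action of player 1 in the cheap profile of `tightGame`. -/
def cheapAction₁ : Finset (Fin 5) := {2, 3, 4}

/-- The action of player 2 in the cheap profile of `tightGame`. -/
def cheapAction₂ : Finset (Fin 5) := {0, 1}

/-- The common action set of the two players in `tightGame`. -/
def tightActions : Finset (Finset (Fin 5)) :=
  {nashAction₁, nashAction₂, cheapAction₁, cheapAction₂}

/-- The slopes of the resource costs in `tightGame`. Exchanging `w₁` with `w₂`, resource `0` with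
`1` and resource `2` with `3` leaves them invariant and swaps the two equilibrium actions. -/
def tightSlope (w₁ w₂ : ℝ) : Fin 5 → ℝ :=
  ![(w₁ + w₂) ^ 2, (w₁ + w₂) ^ 2, w₁ * (w₁ + w₂), w₂ * (w₁ + w₂), w₁ ^ 2 + w₁ * w₂ + w₂ ^ 2]

theorem tightSlope_nonneg {w₁ w₂ : ℝ} (h₁ : 0 ≤ w₁) (h₂ : 0 ≤ w₂) (r : Fin 5) :
    0 ≤ tightSlope w₁ w₂ r := by
  fin_cases r <;> dsimp [tightSlope] <;> positivity

section TightSlope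

variable (w₁ w₂ : ℝ)

theorem sum_tightSlope_nashAction₁ :
    ∑ r ∈ nashAction₁, tightSlope w₁ w₂ r = 2 * w₁ ^ 2 + 4 * w₁ * w₂ + 3 * w₂ ^ 2 :=
  calc
    ∑ r ∈ nashAction₁, tightSlope w₁ w₂ r =
        (w₁ + w₂) ^ 2 + (w₂ * (w₁ + w₂) + (w₁ ^ 2 + w₁ * w₂ + w₂ ^ 2)) := by
      simp [nashAction₁, tightSlope]
    _ = 2 * w₁ ^ 2 + 4 * w₁ * w₂ + 3 * w₂ ^ 2 := by ring

theorem sum_tightSlope_nashAction₂ :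
    ∑ r ∈ nashAction₂, tightSlope w₁ w₂ r = 3 * w₁ ^ 2 + 4 * w₁ * w₂ + 2 * w₂ ^ 2 :=
  calc
    ∑ r ∈ nashAction₂, tightSlope w₁ w₂ r =
        (w₁ + w₂) ^ 2 + (w₁ * (w₁ + w₂) + (w₁ ^ 2 + w₁ * w₂ + w₂ ^ 2)) := by
      simp [nashAction₂, tightSlope]
    _ = 3 * w₁ ^ 2 + 4 * w₁ * w₂ + 2 * w₂ ^ 2 := by ring

theorem sum_tightSlope_cheapAction₁ :
    ∑ r ∈ cheapAction₁, tightSlope w₁ w₂ r = 2 * w₁ ^ 2 + 3 * w₁ * w₂ + 2 * w₂ ^ 2 :=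
  calc
    ∑ r ∈ cheapAction₁, tightSlope w₁ w₂ r =
        w₁ * (w₁ + w₂) + (w₂ * (w₁ + w₂) + (w₁ ^ 2 + w₁ * w₂ + w₂ ^ 2)) := by
      simp [cheapAction₁, tightSlope]
    _ = 2 * w₁ ^ 2 + 3 * w₁ * w₂ + 2 * w₂ ^ 2 := by ring

theorem sum_tightSlope_cheapAction₂ :
    ∑ r ∈ cheapAction₂, tightSlope w₁ w₂ r = 2 * (w₁ + w₂) ^ 2 :=
  calc
    ∑ r ∈ cheapAction₂, tightSlope w₁ w₂ r = (w₁ + w₂) ^ 2 + (w₁ + w₂) ^ 2 := by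
      simp [cheapAction₂, tightSlope]
    _ = 2 * (w₁ + w₂) ^ 2 := by ring

theorem sum_tightSlope_nashAction₁_inter_nashAction₂ :
    ∑ r ∈ nashAction₁ ∩ nashAction₂, tightSlope w₁ w₂ r = w₁ ^ 2 + w₁ * w₂ + w₂ ^ 2 := by
  simp [nashAction₁, nashAction₂, tightSlope]

end TightSlope

/-- The lower-bound instance: a symmetric game on five resources with linear costs, having
`(nashAction₁, nashAction₂)` as a costly equilibrium and `(cheapAction₁, cheapAction₂)` as a cheap
profile. -/
def tightGame {w₁ w₂ : ℝ} (h₁ : 0 ≤ w₁) (h₂ : 0 ≤ w₂) : CGame w₁ w₂ where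
  n := 5
  A1 := tightActions
  A2 := tightActions
  A1_nonempty := insert_nonempty _ _
  A2_nonempty := insert_nonempty _ _
  α := 0
  β := tightSlope w₁ w₂
  α_nonneg _ := le_rfl
  β_nonneg := tightSlope_nonneg h₁ h₂

section TightGame

variable {w₁ w₂ : ℝ} (h₁ : 0 ≤ w₁) (h₂ : 0 ≤ w₂)

theorem tightGame_C1uni (a₁ a₂ : Finset (Fin 5)) :
    (tightGame h₁ h₂).C1uni a₁ a₂ =
      (∑ r ∈ a₁, tightSlope w₁ w₂ r) * w₁ + (∑ r ∈ a₁ ∩ a₂, tightSlope w₁ w₂ r) * w₂ := by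
  simp only [C1uni_eq_sum_add_sum_inter, tightGame, Pi.zero_apply, zero_add, sum_mul]

theorem tightGame_C2uni (a₁ a₂ : Finset (Fin 5)) :
    (tightGame h₁ h₂).C2uni a₁ a₂ =
      (∑ r ∈ a₂, tightSlope w₁ w₂ r) * w₂ + (∑ r ∈ a₁ ∩ a₂, tightSlope w₁ w₂ r) * w₁ := by
  simp only [C2uni_eq_sum_add_sum_inter, tightGame, Pi.zero_apply, zero_add, sum_mul]

theorem tightGame_C1uni_nash :
    (tightGame h₁ h₂).C1uni nashAction₁ nashAction₂ = (w₁ + w₂) ^ 2 * (2 * w₁ + w₂) := by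
  rw [tightGame_C1uni, sum_tightSlope_nashAction₁, sum_tightSlope_nashAction₁_inter_nashAction₂]
  ring

theorem tightGame_C1uni_nash₂_nash₂ :
    (tightGame h₁ h₂).C1uni nashAction₂ nashAction₂ =
      (w₁ + w₂) ^ 2 * (2 * w₁ + w₂) + (w₁ + w₂) * (w₁ ^ 2 + w₁ * w₂ + w₂ ^ 2) := by
  rw [tightGame_C1uni, inter_self, sum_tightSlope_nashAction₂]
  ring

theorem tightGame_C1uni_cheap₁_nash₂ :
    (tightGame h₁ h₂).C1uni cheapAction₁ nashAction₂ = (w₁ + w₂) ^ 2 * (2 * w₁ + w₂) := by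
  have overlap : ∑ r ∈ cheapAction₁ ∩ nashAction₂, tightSlope w₁ w₂ r =
      w₁ * (w₁ + w₂) + (w₁ ^ 2 + w₁ * w₂ + w₂ ^ 2) := by
    simp [cheapAction₁, nashAction₂, tightSlope]
  rw [tightGame_C1uni, sum_tightSlope_cheapAction₁, overlap]
  ring

theorem tightGame_C1uni_cheap₂_nash₂ :
    (tightGame h₁ h₂).C1uni cheapAction₂ nashAction₂ = (w₁ + w₂) ^ 2 * (2 * w₁ + w₂) := by
  have overlap : ∑ r ∈ cheapAction₂ ∩ nashAction₂, tightSlope w₁ w₂ r = (w₁ + w₂) ^ 2 := by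
    simp [cheapAction₂, nashAction₂, tightSlope]
  rw [tightGame_C1uni, sum_tightSlope_cheapAction₂, overlap]
  ring

theorem tightGame_C1uni_nash_le {b : Finset (Fin 5)} (hb : b ∈ tightActions) :
    (tightGame h₁ h₂).C1uni nashAction₁ nashAction₂ ≤
      (tightGame h₁ h₂).C1uni b nashAction₂ := by
  simp only [tightActions, mem_insert, mem_singleton] at hb
  rw [tightGame_C1uni_nash]
  rcases hb with rfl | rfl | rfl | rfl
  · exact (tightGame_C1uni_nash h₁ h₂).ge
  · rw [tightGame_C1uni_nash₂_nash₂]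
    exact le_add_of_nonneg_right (by positivity)
  · exact (tightGame_C1uni_cheap₁_nash₂ h₁ h₂).ge
  · exact (tightGame_C1uni_cheap₂_nash₂ h₁ h₂).ge

theorem tightGame_C2uni_nash :
    (tightGame h₁ h₂).C2uni nashAction₁ nashAction₂ = (w₁ + w₂) ^ 2 * (w₁ + 2 * w₂) := by
  rw [tightGame_C2uni, sum_tightSlope_nashAction₂, sum_tightSlope_nashAction₁_inter_nashAction₂]
  ring

theorem tightGame_C2uni_nash₁_nash₁ :
    (tightGame h₁ h₂).C2uni nashAction₁ nashAction₁ =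
      (w₁ + w₂) ^ 2 * (w₁ + 2 * w₂) + (w₁ + w₂) * (w₁ ^ 2 + w₁ * w₂ + w₂ ^ 2) := by
  rw [tightGame_C2uni, inter_self, sum_tightSlope_nashAction₁]
  ring

theorem tightGame_C2uni_nash₁_cheap₁ :
    (tightGame h₁ h₂).C2uni nashAction₁ cheapAction₁ = (w₁ + w₂) ^ 2 * (w₁ + 2 * w₂) := by
  have overlap : ∑ r ∈ nashAction₁ ∩ cheapAction₁, tightSlope w₁ w₂ r =
      w₂ * (w₁ + w₂) + (w₁ ^ 2 + w₁ * w₂ + w₂ ^ 2) := by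
    simp [nashAction₁, cheapAction₁, tightSlope]
  rw [tightGame_C2uni, sum_tightSlope_cheapAction₁, overlap]
  ring

theorem tightGame_C2uni_nash₁_cheap₂ :
    (tightGame h₁ h₂).C2uni nashAction₁ cheapAction₂ = (w₁ + w₂) ^ 2 * (w₁ + 2 * w₂) := by
  have overlap : ∑ r ∈ nashAction₁ ∩ cheapAction₂, tightSlope w₁ w₂ r = (w₁ + w₂) ^ 2 := by
    simp [nashAction₁, cheapAction₂, tightSlope]
  rw [tightGame_C2uni, sum_tightSlope_cheapAction₂, overlap]
  ring

theorem tightGame_C2uni_nash_le {b : Finset (Fin 5)} (hb : b ∈ tightActions) :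
    (tightGame h₁ h₂).C2uni nashAction₁ nashAction₂ ≤
      (tightGame h₁ h₂).C2uni nashAction₁ b := by
  simp only [tightActions, mem_insert, mem_singleton] at hb
  rw [tightGame_C2uni_nash]
  rcases hb with rfl | rfl | rfl | rfl
  · rw [tightGame_C2uni_nash₁_nash₁]
    exact le_add_of_nonneg_right (by positivity)
  · exact (tightGame_C2uni_nash h₁ h₂).ge
  · exact (tightGame_C2uni_nash₁_cheap₁ h₁ h₂).ge
  · exact (tightGame_C2uni_nash₁_cheap₂ h₁ h₂).ge

theorem tightGame_isNashUni : (tightGame h₁ h₂).IsNashUni nashAction₁ nashAction₂ := by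
  have nash_mem : nashAction₁ ∈ tightActions ∧ nashAction₂ ∈ tightActions := by
    simp [tightActions]
  exact ⟨nash_mem, fun _ ↦ tightGame_C1uni_nash_le h₁ h₂, fun _ ↦ tightGame_C2uni_nash_le h₁ h₂⟩

theorem tightGame_isProfile_cheap : (tightGame h₁ h₂).IsProfile cheapAction₁ cheapAction₂ := by
  have cheap_mem : cheapAction₁ ∈ tightActions ∧ cheapAction₂ ∈ tightActions := by
    simp [tightActions]
  exact cheap_mem

theorem tightGame_Cuni_nash :
    (tightGame h₁ h₂).Cuni nashAction₁ nashAction₂ = 3 * (w₁ + w₂) ^ 3 := by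
  simp only [Cuni, tightGame_C1uni_nash, tightGame_C2uni_nash]
  ring

theorem tightGame_Cuni_cheap :
    (tightGame h₁ h₂).Cuni cheapAction₁ cheapAction₂ =
      2 * w₁ ^ 3 + 5 * w₁ ^ 2 * w₂ + 6 * w₁ * w₂ ^ 2 + 2 * w₂ ^ 3 := by
  have no_overlap : ∑ r ∈ cheapAction₁ ∩ cheapAction₂, tightSlope w₁ w₂ r = 0 := by
    simp [cheapAction₁, cheapAction₂]
  simp only [Cuni, tightGame_C1uni, tightGame_C2uni, sum_tightSlope_cheapAction₁,
    sum_tightSlope_cheapAction₂, no_overlap]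
  ring

theorem tightGame_Cuni_cheap_pos (h : 0 < w₁ + w₂) :
    0 < (tightGame h₁ h₂).Cuni cheapAction₁ cheapAction₂ := by
  rw [tightGame_Cuni_cheap]
  calc
    0 < (w₁ + w₂) ^ 3 := by positivity
    _ ≤ (w₁ + w₂) ^ 3 + (w₁ ^ 3 + 2 * w₁ ^ 2 * w₂ + 3 * w₁ * w₂ ^ 2 + w₂ ^ 3) :=
      le_add_of_nonneg_right (by positivity)
    _ = 2 * w₁ ^ 3 + 5 * w₁ ^ 2 * w₂ + 6 * w₁ * w₂ ^ 2 + 2 * w₂ ^ 3 := by ring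

end TightGame

end CGame

theorem poa_sym_uniform_lower_mid_general (w₁ w₂ : ℝ) (h₁ : 0 ≤ w₁) (h₂ : 0 ≤ w₂)
    (h : 0 < w₁ + w₂) :
    ∃ (G : CGame w₁ w₂), G.Symm ∧
      ∃ a₁ a₂ b₁ b₂ : Finset (Fin G.n),
        G.IsNashUni a₁ a₂ ∧ G.IsProfile b₁ b₂ ∧ 0 < G.Cuni b₁ b₂ ∧
        G.Cuni a₁ a₂ =
          (3 * (w₁ + w₂) ^ 3 /
            (2 * w₁ ^ 3 + 5 * w₁ ^ 2 * w₂ + 6 * w₁ * w₂ ^ 2 + 2 * w₂ ^ 3)) *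
            G.Cuni b₁ b₂ := by
  have cheap_pos := CGame.tightGame_Cuni_cheap_pos h₁ h₂ h
  refine ⟨CGame.tightGame h₁ h₂, rfl, CGame.nashAction₁, CGame.nashAction₂, CGame.cheapAction₁,
    CGame.cheapAction₂, CGame.tightGame_isNashUni h₁ h₂, CGame.tightGame_isProfile_cheap h₁ h₂,
    cheap_pos, ?_⟩
  rw [CGame.tightGame_Cuni_nash, ← CGame.tightGame_Cuni_cheap h₁ h₂,
    div_mul_cancel₀ _ cheap_pos.ne']

/-- matching lower-bound instance for symmetric simultaneous
uniformly weighted games, case `w₂ ≤ w₁ ≤ 2w₂`. -/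
theorem poa_sym_uniform_lower_mid (w₁ w₂ : ℝ) (h₁ : 0 < w₁) (h₂ : 0 < w₂)
    (hlo : w₂ ≤ w₁) (hhi : w₁ ≤ 2 * w₂) :
    ∃ (G : CGame w₁ w₂), G.Symm ∧
      ∃ a₁ a₂ b₁ b₂ : Finset (Fin G.n),
        G.IsNashUni a₁ a₂ ∧ G.IsProfile b₁ b₂ ∧ 0 < G.Cuni b₁ b₂ ∧
        G.Cuni a₁ a₂ =
          (3 * (w₁ + w₂) ^ 3 /
            (2 * w₁ ^ 3 + 5 * w₁ ^ 2 * w₂ + 6 * w₁ * w₂ ^ 2 + 2 * w₂ ^ 3)) *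
            G.Cuni b₁ b₂ :=
  poa_sym_uniform_lower_mid_general w₁ w₂ h₁.le h₂.le (add_pos h₁ h₂)
end

section
/- Let w₁, w₂ > 0 with 2·w₂ ≤ w₁ ≤ τ·w₂, where τ = (2·(62 − 3·√183)^(1/3) + (62 + 3·√183)^(1/3))/3. There exist a symmetric weighted two-player congestion game with weights w₁, w₂ and uniform costs, a pure Nash equilibrium A, and an action profile B such that C(B) > 0 and C(A) = ((3·w₁³ + 8·w₁²·w₂ + 5·w₁·w₂² + 2·w₂³)/(2·w₁³ + 4·w₁²·w₂ + 4·w₁·w₂² + 2·w₂³)) · C(B). -/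
open Finset Real

/-!
The equilibrium `({3, 4}, {1, 2, 4})` of a symmetric game on five resources is compared with the
profile `({0, 2, 4}, {1, 3})`, all four actions being available to both players. The cost
coefficients make each player indifferent between her equilibrium action and both actions of the
second profile; copying the opponent's equilibrium action instead costs either player
`w₁ * (w₁ ^ 2 + w₁ * w₂ + w₂ ^ 2)` more.
-/

namespace CGame.FiveResource

/-- The action of player 1 in the equilibrium of the five-resource game. -/
abbrev eqAction₁ : Finset (Fin 5) := {3, 4}

/-- The action of player 2 in the equilibrium of the five-resource game. -/
abbrev eqAction₂ : Finset (Fin 5) := {1, 2, 4}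

/-- The action of player 1 in the profile with which the equilibrium is compared. -/
abbrev refAction₁ : Finset (Fin 5) := {0, 2, 4}

/-- The action of player 2 in the profile with which the equilibrium is compared. -/
abbrev refAction₂ : Finset (Fin 5) := {1, 3}

/-- The action set shared by the two players of the five-resource game. -/
def actions : Finset (Finset (Fin 5)) := {eqAction₁, eqAction₂, refAction₁, refAction₂}

/-- The load-independent part `α` of the resource costs in the five-resource game. -/
def constCoeff (w₁ w₂ : ℝ) : Fin 5 → ℝ :=
  ![(w₁ ^ 2 + w₁ * w₂ + w₂ ^ 2) * w₂, 0, 0, 0, 0]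

/-- The coefficients `β` of the load in the resource costs of the five-resource game. -/
def linCoeff (w₁ w₂ : ℝ) : Fin 5 → ℝ :=
  ![0, w₁ ^ 2 + w₁ * w₂ + w₂ ^ 2, w₁ ^ 2 - w₂ ^ 2, w₁ ^ 2 + 2 * w₁ * w₂,
    w₁ ^ 2 + w₁ * w₂ + w₂ ^ 2]

variable {w₁ w₂ : ℝ}

theorem mem_actions {a : Finset (Fin 5)} :
    a ∈ actions ↔ a = eqAction₁ ∨ a = eqAction₂ ∨ a = refAction₁ ∨ a = refAction₂ := by
  simp only [actions, mem_insert, mem_singleton]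

theorem constCoeff_nonneg (h₁ : 0 ≤ w₁) (h₂ : 0 ≤ w₂) (r : Fin 5) : 0 ≤ constCoeff w₁ w₂ r := by
  have h₀ : 0 ≤ (w₁ ^ 2 + w₁ * w₂ + w₂ ^ 2) * w₂ := by positivity
  fin_cases r
  exacts [h₀, le_rfl, le_rfl, le_rfl, le_rfl]

theorem linCoeff_nonneg (h₂ : 0 ≤ w₂) (h : w₂ ≤ w₁) (r : Fin 5) : 0 ≤ linCoeff w₁ w₂ r := by
  have h₁ : 0 ≤ w₁ := h₂.trans h
  have hquad : 0 ≤ w₁ ^ 2 + w₁ * w₂ + w₂ ^ 2 := by positivity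
  have hdiff : 0 ≤ w₁ ^ 2 - w₂ ^ 2 := sub_nonneg.2 (by gcongr)
  have hmix : 0 ≤ w₁ ^ 2 + 2 * w₁ * w₂ := by positivity
  fin_cases r
  exacts [le_rfl, hquad, hdiff, hmix, hquad]

/-- The symmetric game on five resources that witnesses the lower bound. -/
def game (h₂ : 0 ≤ w₂) (h : w₂ ≤ w₁) : CGame w₁ w₂ where
  n := 5
  A1 := actions
  A2 := actions
  A1_nonempty := insert_nonempty _ _
  A2_nonempty := insert_nonempty _ _
  α := constCoeff w₁ w₂
  β := linCoeff w₁ w₂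
  α_nonneg := constCoeff_nonneg (h₂.trans h) h₂
  β_nonneg := linCoeff_nonneg h₂ h

variable (h₂ : 0 ≤ w₂) (h : w₂ ≤ w₁)

theorem C1uni_game (a₁ a₂ : Finset (Fin 5)) :
    (game h₂ h).C1uni a₁ a₂ =
      (if 0 ∈ a₁ then (w₁ ^ 2 + w₁ * w₂ + w₂ ^ 2) * w₂ else 0) +
      (if 1 ∈ a₁ then (w₁ ^ 2 + w₁ * w₂ + w₂ ^ 2) * (w₁ + if 1 ∈ a₂ then w₂ else 0) else 0) +
      (if 2 ∈ a₁ then (w₁ ^ 2 - w₂ ^ 2) * (w₁ + if 2 ∈ a₂ then w₂ else 0) else 0) +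
      (if 3 ∈ a₁ then (w₁ ^ 2 + 2 * w₁ * w₂) * (w₁ + if 3 ∈ a₂ then w₂ else 0) else 0) +
      (if 4 ∈ a₁ then (w₁ ^ 2 + w₁ * w₂ + w₂ ^ 2) * (w₁ + if 4 ∈ a₂ then w₂ else 0) else 0) := by
  dsimp only [C1uni, load, game]
  rw [← Fintype.sum_ite_mem a₁, Fin.sum_univ_five]
  simp +contextual [constCoeff, linCoeff]

theorem C2uni_game (a₁ a₂ : Finset (Fin 5)) :
    (game h₂ h).C2uni a₁ a₂ =
      (if 0 ∈ a₂ then (w₁ ^ 2 + w₁ * w₂ + w₂ ^ 2) * w₂ else 0) +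
      (if 1 ∈ a₂ then (w₁ ^ 2 + w₁ * w₂ + w₂ ^ 2) * ((if 1 ∈ a₁ then w₁ else 0) + w₂) else 0) +
      (if 2 ∈ a₂ then (w₁ ^ 2 - w₂ ^ 2) * ((if 2 ∈ a₁ then w₁ else 0) + w₂) else 0) +
      (if 3 ∈ a₂ then (w₁ ^ 2 + 2 * w₁ * w₂) * ((if 3 ∈ a₁ then w₁ else 0) + w₂) else 0) +
      (if 4 ∈ a₂ then (w₁ ^ 2 + w₁ * w₂ + w₂ ^ 2) * ((if 4 ∈ a₁ then w₁ else 0) + w₂) else 0) := by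
  dsimp only [C2uni, load, game]
  rw [← Fintype.sum_ite_mem a₂, Fin.sum_univ_five]
  simp +contextual [constCoeff, linCoeff]

theorem C1uni_refAction₁_eqAction₂ :
    (game h₂ h).C1uni refAction₁ eqAction₂ = (game h₂ h).C1uni eqAction₁ eqAction₂ := by
  simp +decide only [C1uni_game, ↓reduceIte]
  ring

theorem C1uni_refAction₂_eqAction₂ :
    (game h₂ h).C1uni refAction₂ eqAction₂ = (game h₂ h).C1uni eqAction₁ eqAction₂ := by
  simp +decide only [C1uni_game, ↓reduceIte]
  ring

theorem C1uni_eqAction₂_eqAction₂ :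
    (game h₂ h).C1uni eqAction₂ eqAction₂ =
      (game h₂ h).C1uni eqAction₁ eqAction₂ + w₁ * (w₁ ^ 2 + w₁ * w₂ + w₂ ^ 2) := by
  simp +decide only [C1uni_game, ↓reduceIte]
  ring

theorem C2uni_eqAction₁_refAction₁ :
    (game h₂ h).C2uni eqAction₁ refAction₁ = (game h₂ h).C2uni eqAction₁ eqAction₂ := by
  simp +decide only [C2uni_game, ↓reduceIte]
  ring

theorem C2uni_eqAction₁_refAction₂ :
    (game h₂ h).C2uni eqAction₁ refAction₂ = (game h₂ h).C2uni eqAction₁ eqAction₂ := by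
  simp +decide only [C2uni_game, ↓reduceIte]
  ring

theorem C2uni_eqAction₁_eqAction₁ :
    (game h₂ h).C2uni eqAction₁ eqAction₁ =
      (game h₂ h).C2uni eqAction₁ eqAction₂ + w₁ * (w₁ ^ 2 + w₁ * w₂ + w₂ ^ 2) := by
  simp +decide only [C2uni_game, ↓reduceIte]
  ring

theorem isNashUni_eqAction : (game h₂ h).IsNashUni eqAction₁ eqAction₂ := by
  have h₁ : 0 ≤ w₁ := h₂.trans h
  have hloss : 0 ≤ w₁ * (w₁ ^ 2 + w₁ * w₂ + w₂ ^ 2) := by positivity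
  refine ⟨⟨mem_actions.2 (.inl rfl), mem_actions.2 (.inr (.inl rfl))⟩,
    fun b₁ hb₁ ↦ ?_, fun b₂ hb₂ ↦ ?_⟩
  · rcases mem_actions.1 hb₁ with rfl | rfl | rfl | rfl
    · exact le_rfl
    · rw [C1uni_eqAction₂_eqAction₂]
      exact le_add_of_nonneg_right hloss
    · exact (C1uni_refAction₁_eqAction₂ h₂ h).ge
    · exact (C1uni_refAction₂_eqAction₂ h₂ h).ge
  · rcases mem_actions.1 hb₂ with rfl | rfl | rfl | rfl
    · rw [C2uni_eqAction₁_eqAction₁]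
      exact le_add_of_nonneg_right hloss
    · exact le_rfl
    · exact (C2uni_eqAction₁_refAction₁ h₂ h).ge
    · exact (C2uni_eqAction₁_refAction₂ h₂ h).ge

theorem isProfile_refAction : (game h₂ h).IsProfile refAction₁ refAction₂ :=
  ⟨mem_actions.2 (.inr (.inr (.inl rfl))), mem_actions.2 (.inr (.inr (.inr rfl)))⟩

theorem Cuni_eqAction :
    (game h₂ h).Cuni eqAction₁ eqAction₂ =
      3 * w₁ ^ 3 + 8 * w₁ ^ 2 * w₂ + 5 * w₁ * w₂ ^ 2 + 2 * w₂ ^ 3 := by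
  simp +decide only [Cuni, C1uni_game, C2uni_game, ↓reduceIte]
  ring

theorem Cuni_refAction :
    (game h₂ h).Cuni refAction₁ refAction₂ =
      2 * w₁ ^ 3 + 4 * w₁ ^ 2 * w₂ + 4 * w₁ * w₂ ^ 2 + 2 * w₂ ^ 3 := by
  simp +decide only [Cuni, C1uni_game, C2uni_game, ↓reduceIte]
  ring

end CGame.FiveResource

open CGame.FiveResource in
theorem poa_sym_uniform_lower_high_general (w₁ w₂ : ℝ) (h₁ : 0 < w₁) (h₂ : 0 ≤ w₂)
    (h : w₂ ≤ w₁) :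
    ∃ (G : CGame w₁ w₂), G.Symm ∧
      ∃ a₁ a₂ b₁ b₂ : Finset (Fin G.n),
        G.IsNashUni a₁ a₂ ∧ G.IsProfile b₁ b₂ ∧ 0 < G.Cuni b₁ b₂ ∧
        G.Cuni a₁ a₂ =
          ((3 * w₁ ^ 3 + 8 * w₁ ^ 2 * w₂ + 5 * w₁ * w₂ ^ 2 + 2 * w₂ ^ 3) /
            (2 * w₁ ^ 3 + 4 * w₁ ^ 2 * w₂ + 4 * w₁ * w₂ ^ 2 + 2 * w₂ ^ 3)) *
            G.Cuni b₁ b₂ := by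
  have hpos : 0 < 2 * w₁ ^ 3 + 4 * w₁ ^ 2 * w₂ + 4 * w₁ * w₂ ^ 2 + 2 * w₂ ^ 3 := by positivity
  refine ⟨game h₂ h, rfl, eqAction₁, eqAction₂, refAction₁, refAction₂,
    isNashUni_eqAction h₂ h, isProfile_refAction h₂ h, ?_, ?_⟩
  · rwa [Cuni_refAction]
  · rw [Cuni_eqAction, Cuni_refAction, div_mul_cancel₀ _ hpos.ne']

/-- matching lower-bound instance for symmetric simultaneous
uniformly weighted games, case `2w₂ ≤ w₁ ≤ τw₂`. -/
theorem poa_sym_uniform_lower_high (w₁ w₂ : ℝ) (h₁ : 0 < w₁) (h₂ : 0 < w₂) (τ : ℝ)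
    (hτ : τ = (2 * (62 - 3 * Real.sqrt 183) ^ ((1 : ℝ) / 3) + (62 + 3 * Real.sqrt 183) ^ ((1 : ℝ) / 3)) / 3)
    (hlo : 2 * w₂ ≤ w₁) (hhi : w₁ ≤ τ * w₂) :
    ∃ (G : CGame w₁ w₂), G.Symm ∧
      ∃ a₁ a₂ b₁ b₂ : Finset (Fin G.n),
        G.IsNashUni a₁ a₂ ∧ G.IsProfile b₁ b₂ ∧ 0 < G.Cuni b₁ b₂ ∧
        G.Cuni a₁ a₂ =
          ((3 * w₁ ^ 3 + 8 * w₁ ^ 2 * w₂ + 5 * w₁ * w₂ ^ 2 + 2 * w₂ ^ 3) /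
            (2 * w₁ ^ 3 + 4 * w₁ ^ 2 * w₂ + 4 * w₁ * w₂ ^ 2 + 2 * w₂ ^ 3)) *
            G.Cuni b₁ b₂ := by
  exact poa_sym_uniform_lower_high_general w₁ w₂ h₁ h₂.le (by linarith)
end

section
/- For all w₁, w₂ > 0 there exist a symmetric weighted two-player congestion game with weights w₁, w₂ and uniform costs, a pure Nash equilibrium A, and an action profile B such that C(B) > 0 and C(A) ≥ ((2·w₁ + 2·w₂)/(w₁ + 2·w₂)) · C(B). Consequently, for every ε > 0 there exist such a game (for suitable weights), a pure Nash equilibrium A, and an action profile B with C(B) > 0 and C(A) > (2 − ε) · C(B). -/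
open Finset Real

/-!
In Pigou's network, one link costs its own load and the other costs the constant `w₁ + w₂`. Sharing
the first link is an equilibrium, since a deviating player would pay `w₁ + w₂` as before, and its
social cost is `2 * w₁ + 2 * w₂`. Sending player 1 to the second link leaves player 2 paying only
`w₂`, for a social cost of `w₁ + 2 * w₂`. The ratio tends to `2` as `w₂ / w₁ → 0`.
-/

namespace CGame

variable {w₁ w₂ : ℝ}

theorem C1uni_singleton_singleton (G : CGame w₁ w₂) (r s : Fin G.n) :
    G.C1uni {r} {s} = G.α r + G.β r * (w₁ + if r = s then w₂ else 0) := by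
  simp [C1uni, load]

theorem C2uni_singleton_singleton (G : CGame w₁ w₂) (r s : Fin G.n) :
    G.C2uni {r} {s} = G.α s + G.β s * ((if s = r then w₁ else 0) + w₂) := by
  simp [C2uni, load]

/-- The symmetric game on a network of `n` parallel links: each player chooses exactly one link,
encoded as a singleton action, and link `r` costs `α r + β r * x` under load `x`. -/
def parallelLinks {n : ℕ} [NeZero n] (α β : Fin n → ℝ) (hα : ∀ r, 0 ≤ α r) (hβ : ∀ r, 0 ≤ β r) :
    CGame w₁ w₂ where
  n := n
  A1 := univ.image singleton
  A2 := univ.image singleton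
  A1_nonempty := univ_nonempty.image _
  A2_nonempty := univ_nonempty.image _
  α := α
  β := β
  α_nonneg := hα
  β_nonneg := hβ

section ParallelLinks

variable {n : ℕ} [NeZero n] {α β : Fin n → ℝ} {hα : ∀ r, 0 ≤ α r} {hβ : ∀ r, 0 ≤ β r}

theorem parallelLinks_symm : (parallelLinks α β hα hβ : CGame w₁ w₂).Symm :=
  rfl

theorem parallelLinks_isProfile (r s : Fin n) :
    (parallelLinks α β hα hβ : CGame w₁ w₂).IsProfile {r} {s} :=
  ⟨mem_image_of_mem _ (mem_univ r), mem_image_of_mem _ (mem_univ s)⟩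

theorem parallelLinks_C1uni (r s : Fin n) :
    (parallelLinks α β hα hβ : CGame w₁ w₂).C1uni {r} {s} =
      α r + β r * (w₁ + if r = s then w₂ else 0) :=
  C1uni_singleton_singleton (parallelLinks α β hα hβ : CGame w₁ w₂) r s

theorem parallelLinks_C2uni (r s : Fin n) :
    (parallelLinks α β hα hβ : CGame w₁ w₂).C2uni {r} {s} =
      α s + β s * ((if s = r then w₁ else 0) + w₂) :=
  C2uni_singleton_singleton (parallelLinks α β hα hβ : CGame w₁ w₂) r s

theorem parallelLinks_Cuni (r s : Fin n) :
    (parallelLinks α β hα hβ : CGame w₁ w₂).Cuni {r} {s} =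
      (α r + β r * (w₁ + if r = s then w₂ else 0)) +
        (α s + β s * ((if s = r then w₁ else 0) + w₂)) :=
  congrArg₂ (· + ·) (parallelLinks_C1uni r s) (parallelLinks_C2uni r s)

theorem parallelLinks_isNashUni_iff (r s : Fin n) :
    (parallelLinks α β hα hβ : CGame w₁ w₂).IsNashUni {r} {s} ↔
      (∀ t, α r + β r * (w₁ + if r = s then w₂ else 0) ≤
        α t + β t * (w₁ + if t = s then w₂ else 0)) ∧
      ∀ t, α s + β s * ((if s = r then w₁ else 0) + w₂) ≤
        α t + β t * ((if t = r then w₁ else 0) + w₂) := by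
  have forall_action (P : Finset (Fin n) → Prop) :
      (∀ a ∈ univ.image singleton, P a) ↔ ∀ t, P {t} := by simp
  simp only [← parallelLinks_C1uni (hα := hα) (hβ := hβ),
    ← parallelLinks_C2uni (hα := hα) (hβ := hβ)]
  exact (and_iff_right (parallelLinks_isProfile r s)).trans
    (and_congr (forall_action _) (forall_action _))

end ParallelLinks

/-- Pigou's network: link `0` costs its own load, link `1` costs the constant `c`. -/
def pigou (c : ℝ) (hc : 0 ≤ c) : CGame w₁ w₂ :=
  parallelLinks ![0, c] ![1, 0] (by simpa using hc) (by simp)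

section Pigou

variable {c : ℝ} {hc : 0 ≤ c}

theorem pigou_isNashUni_share_iff :
    (pigou c hc : CGame w₁ w₂).IsNashUni {(0 : Fin 2)} {(0 : Fin 2)} ↔ w₁ + w₂ ≤ c :=
  (parallelLinks_isNashUni_iff 0 0).trans (by simp)

theorem pigou_Cuni_share :
    (pigou c hc : CGame w₁ w₂).Cuni {(0 : Fin 2)} {(0 : Fin 2)} = 2 * w₁ + 2 * w₂ :=
  calc
    _ = _ := parallelLinks_Cuni 0 0
    _ = (w₁ + w₂) + (w₁ + w₂) := by simp
    _ = 2 * w₁ + 2 * w₂ := by ring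

theorem pigou_Cuni_split :
    (pigou c hc : CGame w₁ w₂).Cuni {(1 : Fin 2)} {(0 : Fin 2)} = c + w₂ :=
  (parallelLinks_Cuni 1 0).trans (by simp)

end Pigou

theorem exists_symm_isNashUni_Cuni_eq (h : 0 ≤ w₁ + w₂) :
    ∃ G : CGame w₁ w₂, G.Symm ∧ ∃ a₁ a₂ b₁ b₂ : Finset (Fin G.n),
      G.IsNashUni a₁ a₂ ∧ G.IsProfile b₁ b₂ ∧
        G.Cuni a₁ a₂ = 2 * w₁ + 2 * w₂ ∧ G.Cuni b₁ b₂ = w₁ + 2 * w₂ :=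
  ⟨pigou (w₁ + w₂) h, parallelLinks_symm,
    {(0 : Fin 2)}, {(0 : Fin 2)}, {(1 : Fin 2)}, {(0 : Fin 2)},
    pigou_isNashUni_share_iff.2 le_rfl, parallelLinks_isProfile 1 0, pigou_Cuni_share,
    pigou_Cuni_split.trans (by ring)⟩

end CGame

/-- lower-bound instances for symmetric simultaneous uniformly
weighted games whose price of anarchy approaches `2`. -/
theorem poa_sym_uniform_network_lower :
    (∀ w₁ w₂ : ℝ, 0 < w₁ → 0 < w₂ →
      ∃ (G : CGame w₁ w₂), G.Symm ∧
        ∃ a₁ a₂ b₁ b₂ : Finset (Fin G.n),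
          G.IsNashUni a₁ a₂ ∧ G.IsProfile b₁ b₂ ∧ 0 < G.Cuni b₁ b₂ ∧
          ((2 * w₁ + 2 * w₂) / (w₁ + 2 * w₂)) * G.Cuni b₁ b₂ ≤ G.Cuni a₁ a₂) ∧
    (∀ ε : ℝ, 0 < ε →
      ∃ (w₁ w₂ : ℝ), 0 < w₁ ∧ 0 < w₂ ∧
        ∃ (G : CGame w₁ w₂), G.Symm ∧
          ∃ a₁ a₂ b₁ b₂ : Finset (Fin G.n),
            G.IsNashUni a₁ a₂ ∧ G.IsProfile b₁ b₂ ∧ 0 < G.Cuni b₁ b₂ ∧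
            (2 - ε) * G.Cuni b₁ b₂ < G.Cuni a₁ a₂) := by
  constructor
  · intro w₁ w₂ hw₁ hw₂
    obtain ⟨G, hG, a₁, a₂, b₁, b₂, hNash, hProfile, ha, hb⟩ :=
      CGame.exists_symm_isNashUni_Cuni_eq (add_pos hw₁ hw₂).le
    refine ⟨G, hG, a₁, a₂, b₁, b₂, hNash, hProfile, ?_, ?_⟩
    · rw [hb]
      positivity
    · rw [ha, hb, div_mul_cancel₀ _ (by positivity)]
  · intro ε hε
    obtain ⟨G, hG, a₁, a₂, b₁, b₂, hNash, hProfile, ha, hb⟩ :=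
      CGame.exists_symm_isNashUni_Cuni_eq (add_pos one_pos (half_pos hε)).le
    refine ⟨1, ε / 2, one_pos, half_pos hε, G, hG, a₁, a₂, b₁, b₂, hNash, hProfile, ?_, ?_⟩
    · rw [hb]
      positivity
    · rw [ha, hb]
      linarith [mul_pos hε hε]
end

section
/- Let w₁ ≥ w₂ > 0 and let σ be the unique positive real root of x⁴ − 3·x² − 3·x − 1 (equivalently, the unique real root of x³ − x² − 2·x − 1; σ ≈ 2.1479). In every symmetric weighted two-player congestion game with weights w₁, w₂ and proportional costs, every pure Nash equilibrium A and every action profile B satisfy C(A) ≤ ρ · C(B), where ρ = (2·w₁⁴ + 6·w₁³·w₂ + 8·w₁²·w₂² + 6·w₁·w₂³ + 2·w₂⁴)/(2·w₁⁴ + 3·w₁³·w₂ + 4·w₁²·w₂² + 4·w₁·w₂³ + 2·w₂⁴) if w₂ ≤ w₁ ≤ σ·w₂, and ρ = (2·w₁⁴ + 4·w₁³·w₂ + 4·w₁²·w₂² + 2·w₁·w₂³)/(2·w₁⁴ + w₁³·w₂ + 2·w₁²·w₂² + 3·w₁·w₂³ + w₂⁴) if w₁ ≥ σ·w₂. -/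
open Finset Real

/-!
On a resource, the load in a profile and the costs of deviations from it depend only on which of
the four actions `a₁, a₂, b₁, b₂` contain the resource. In a symmetric game each player may deviate
to `b₁` as well as to `b₂`, which gives four equilibrium inequalities. A suitable weighted sum of
them compares `D * C(A)` with `N * C(B)` resource by resource, separately for the constant and the
linear part of the cost, so that only finitely many polynomial inequalities in `w₁, w₂` remain.
The weights solve the dual of the linear program for the price of anarchy; its optimal basis changes
where `w₁³ - w₁² w₂ - 2 w₁ w₂² - w₂³` changes sign, that is, at `w₁ = σ w₂`.
-/

namespace CGame

variable {w₁ w₂ : ℝ}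

/-- The 0-1 incidence of a resource with an action, as a real number, so that costs become
polynomials in incidences. -/
def incidence {n : ℕ} (a : Finset (Fin n)) (r : Fin n) : ℝ := if r ∈ a then 1 else 0

lemma incidence_mem {n : ℕ} (a : Finset (Fin n)) (r : Fin n) :
    incidence a r ∈ ({0, 1} : Set ℝ) := by
  by_cases hr : r ∈ a <;> simp [incidence, hr]

lemma incidence_nonneg {n : ℕ} (a : Finset (Fin n)) (r : Fin n) : 0 ≤ incidence a r := by
  by_cases hr : r ∈ a <;> simp [incidence, hr]

lemma incidence_sq {n : ℕ} (a : Finset (Fin n)) (r : Fin n) :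
    incidence a r ^ 2 = incidence a r := by
  by_cases hr : r ∈ a <;> simp [incidence, hr]

lemma sum_eq_sum_incidence_mul {n : ℕ} (a : Finset (Fin n)) (f : Fin n → ℝ) :
    ∑ r ∈ a, f r = ∑ r, incidence a r * f r := by
  simp [incidence]

lemma load_eq_incidence (G : CGame w₁ w₂) (a₁ a₂ : Finset (Fin G.n)) (r : Fin G.n) :
    G.load a₁ a₂ r = w₁ * incidence a₁ r + w₂ * incidence a₂ r := by
  simp [load, incidence]

lemma C1uni_eq_sum_incidence (G : CGame w₁ w₂) (a₁ a₂ : Finset (Fin G.n)) :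
    G.C1uni a₁ a₂ = ∑ r, incidence a₁ r * (G.α r + G.β r * (w₁ + w₂ * incidence a₂ r)) := by
  rw [C1uni, sum_eq_sum_incidence_mul]
  refine Finset.sum_congr rfl fun r _ => ?_
  rw [load_eq_incidence]
  linear_combination G.β r * w₁ * incidence_sq a₁ r

lemma C2uni_eq_sum_incidence (G : CGame w₁ w₂) (a₁ a₂ : Finset (Fin G.n)) :
    G.C2uni a₁ a₂ = ∑ r, incidence a₂ r * (G.α r + G.β r * (w₁ * incidence a₁ r + w₂)) := by
  rw [C2uni, sum_eq_sum_incidence_mul]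
  refine Finset.sum_congr rfl fun r _ => ?_
  rw [load_eq_incidence]
  linear_combination G.β r * w₂ * incidence_sq a₂ r

lemma Cprop_eq_uni (G : CGame w₁ w₂) (a₁ a₂ : Finset (Fin G.n)) :
    G.Cprop a₁ a₂ = w₁ * G.C1uni a₁ a₂ + w₂ * G.C2uni a₁ a₂ := rfl

lemma Cprop_eq_sum_load (G : CGame w₁ w₂) (a₁ a₂ : Finset (Fin G.n)) :
    G.Cprop a₁ a₂ = ∑ r, (G.α r * G.load a₁ a₂ r + G.β r * G.load a₁ a₂ r ^ 2) := by
  rw [Cprop_eq_uni, C1uni, C2uni, sum_eq_sum_incidence_mul a₁, sum_eq_sum_incidence_mul a₂,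
    Finset.mul_sum, Finset.mul_sum, ← Finset.sum_add_distrib]
  refine Finset.sum_congr rfl fun r _ => ?_
  rw [load_eq_incidence]
  ring

lemma Symm.isProfile_swap {G : CGame w₁ w₂} (hsym : G.Symm) {b₁ b₂ : Finset (Fin G.n)}
    (hB : G.IsProfile b₁ b₂) : G.IsProfile b₂ b₁ :=
  ⟨hsym.symm ▸ hB.2, hsym ▸ hB.1⟩

lemma IsNashProp.isNashUni {G : CGame w₁ w₂} {a₁ a₂ : Finset (Fin G.n)}
    (h₁ : 0 < w₁) (h₂ : 0 < w₂) (hA : G.IsNashProp a₁ a₂) : G.IsNashUni a₁ a₂ :=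
  ⟨hA.1, fun b hb => le_of_mul_le_mul_left (hA.2.1 b hb) h₁,
    fun b hb => le_of_mul_le_mul_left (hA.2.2 b hb) h₂⟩

lemma IsNashUni.add_mul_le_deviations {G : CGame w₁ w₂} {a₁ a₂ b₁ b₂ : Finset (Fin G.n)}
    (hA : G.IsNashUni a₁ a₂) (hB : G.IsProfile b₁ b₂) (hB' : G.IsProfile b₂ b₁)
    {l₁ l₂ m₁ m₂ : ℝ} (hl₁ : 0 ≤ l₁) (hl₂ : 0 ≤ l₂) (hm₁ : 0 ≤ m₁) (hm₂ : 0 ≤ m₂) :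
    (l₁ + l₂) * G.C1uni a₁ a₂ + (m₁ + m₂) * G.C2uni a₁ a₂ ≤
      l₁ * G.C1uni b₁ a₂ + l₂ * G.C1uni b₂ a₂ + m₁ * G.C2uni a₁ b₁ + m₂ * G.C2uni a₁ b₂ := by
  obtain ⟨-, hN₁, hN₂⟩ := hA
  linarith [mul_le_mul_of_nonneg_left (hN₁ b₁ hB.1) hl₁,
    mul_le_mul_of_nonneg_left (hN₁ b₂ hB'.1) hl₂,
    mul_le_mul_of_nonneg_left (hN₂ b₁ hB'.2) hm₁,
    mul_le_mul_of_nonneg_left (hN₂ b₂ hB.2) hm₂]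

/-- Weights for the deviations to `b₁` and `b₂` of player 1 (`l₁, l₂`) and of player 2 (`m₁, m₂`),
the dual variables of the four equilibrium inequalities. The surplus `sᵢ` is the excess of the
total weight of player `i` over `D * wᵢ`, the coefficient of its uniform cost in `D * C(A)`. -/
structure DeviationWeights (w₁ w₂ D : ℝ) where
  l₁ : ℝ
  l₂ : ℝ
  m₁ : ℝ
  m₂ : ℝ
  s₁ : ℝ
  s₂ : ℝ
  l₁_nonneg : 0 ≤ l₁
  l₂_nonneg : 0 ≤ l₂
  m₁_nonneg : 0 ≤ m₁
  m₂_nonneg : 0 ≤ m₂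
  s₁_nonneg : 0 ≤ s₁
  s₂_nonneg : 0 ≤ s₂
  balance₁ : l₁ + l₂ = D * w₁ + s₁
  balance₂ : m₁ + m₂ = D * w₂ + s₂

namespace DeviationWeights

variable {D N : ℝ}

/-- Dual feasibility: the weights certify `D * C(A) ≤ N * C(B)` resource by resource. The variables
`p₁, p₂` are the incidences of a resource with `a₁, a₂`; `const₁, linear₁` concern a resource used
by `b₁` only, with constant and with linear cost, `const₂, linear₂` one used by `b₂` only, and
`overlap` reduces a resource used by both to these cases. -/
structure IsFeasible (W : DeviationWeights w₁ w₂ D) (N : ℝ) : Prop where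
  const₁ : W.l₁ + W.m₁ ≤ N * w₁
  const₂ : W.l₂ + W.m₂ ≤ N * w₂
  linear₁ : ∀ p₁ ∈ ({0, 1} : Set ℝ), ∀ p₂ ∈ ({0, 1} : Set ℝ),
    W.l₁ * (w₁ + w₂ * p₂) + W.m₁ * (w₁ * p₁ + w₂) ≤
      N * w₁ ^ 2 + (W.s₁ * p₁ * (w₁ + w₂ * p₂) + W.s₂ * p₂ * (w₁ * p₁ + w₂))
  linear₂ : ∀ p₁ ∈ ({0, 1} : Set ℝ), ∀ p₂ ∈ ({0, 1} : Set ℝ),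
    W.l₂ * (w₁ + w₂ * p₂) + W.m₂ * (w₁ * p₁ + w₂) ≤
      N * w₂ ^ 2 + (W.s₁ * p₁ * (w₁ + w₂ * p₂) + W.s₂ * p₂ * (w₁ * p₁ + w₂))
  overlap : (W.s₁ + W.s₂) * (w₁ + w₂) ≤ N * (2 * w₁ * w₂)

namespace IsFeasible

variable {W : DeviationWeights w₁ w₂ D} (hW : W.IsFeasible N)

include hW

lemma const_le {p₁ p₂ q₁ q₂ : ℝ} (hp₁ : 0 ≤ p₁) (hp₂ : 0 ≤ p₂) (hq₁ : 0 ≤ q₁) (hq₂ : 0 ≤ q₂) :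
    (W.l₁ + W.m₁) * q₁ + (W.l₂ + W.m₂) * q₂ ≤
      N * (w₁ * q₁ + w₂ * q₂) + (W.s₁ * p₁ + W.s₂ * p₂) := by
  linarith [mul_le_mul_of_nonneg_right hW.const₁ hq₁, mul_le_mul_of_nonneg_right hW.const₂ hq₂,
    mul_nonneg W.s₁_nonneg hp₁, mul_nonneg W.s₂_nonneg hp₂]

lemma linear_le {p₁ p₂ q₁ q₂ : ℝ} (h₁ : 0 ≤ w₁) (h₂ : 0 ≤ w₂)
    (hp₁ : p₁ ∈ ({0, 1} : Set ℝ)) (hp₂ : p₂ ∈ ({0, 1} : Set ℝ))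
    (hq₁ : q₁ ∈ ({0, 1} : Set ℝ)) (hq₂ : q₂ ∈ ({0, 1} : Set ℝ)) :
    (W.l₁ * (w₁ + w₂ * p₂) + W.m₁ * (w₁ * p₁ + w₂)) * q₁ +
        (W.l₂ * (w₁ + w₂ * p₂) + W.m₂ * (w₁ * p₁ + w₂)) * q₂ ≤
      N * (w₁ * q₁ + w₂ * q₂) ^ 2 +
        (W.s₁ * p₁ * (w₁ + w₂ * p₂) + W.s₂ * p₂ * (w₁ * p₁ + w₂)) := by
  have hlin₁ := hW.linear₁ p₁ hp₁ p₂ hp₂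
  have hlin₂ := hW.linear₂ p₁ hp₁ p₂ hp₂
  set S := W.s₁ * p₁ * (w₁ + w₂ * p₂) + W.s₂ * p₂ * (w₁ * p₁ + w₂)
  have hs₁ := W.s₁_nonneg
  have hs₂ := W.s₂_nonneg
  have hS_nonneg : 0 ≤ S := by
    rcases hp₁ with rfl | rfl <;> rcases hp₂ with rfl | rfl <;> positivity
  have hS_le : S ≤ N * (2 * w₁ * w₂) := by
    refine le_trans ?_ hW.overlap
    have hs₁w₁ := mul_nonneg hs₁ h₁
    have hs₁w₂ := mul_nonneg hs₁ h₂
    have hs₂w₁ := mul_nonneg hs₂ h₁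
    have hs₂w₂ := mul_nonneg hs₂ h₂
    rcases hp₁ with rfl | rfl <;> rcases hp₂ with rfl | rfl <;> linarith
  rcases hq₁ with rfl | rfl <;> rcases hq₂ with rfl | rfl <;> linarith

lemma deviations_le (h₁ : 0 ≤ w₁) (h₂ : 0 ≤ w₂) (G : CGame w₁ w₂)
    (a₁ a₂ b₁ b₂ : Finset (Fin G.n)) :
    W.l₁ * G.C1uni b₁ a₂ + W.l₂ * G.C1uni b₂ a₂ + W.m₁ * G.C2uni a₁ b₁ + W.m₂ * G.C2uni a₁ b₂ ≤
      N * G.Cprop b₁ b₂ + W.s₁ * G.C1uni a₁ a₂ + W.s₂ * G.C2uni a₁ a₂ := by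
  simp only [Cprop_eq_sum_load, load_eq_incidence, C1uni_eq_sum_incidence, C2uni_eq_sum_incidence,
    Finset.mul_sum, ← Finset.sum_add_distrib]
  refine Finset.sum_le_sum fun r _ => ?_
  have hconst := mul_le_mul_of_nonneg_left
    (hW.const_le (incidence_nonneg a₁ r) (incidence_nonneg a₂ r) (incidence_nonneg b₁ r)
      (incidence_nonneg b₂ r)) (G.α_nonneg r)
  have hlinear := mul_le_mul_of_nonneg_left
    (hW.linear_le h₁ h₂ (incidence_mem a₁ r) (incidence_mem a₂ r) (incidence_mem b₁ r)
      (incidence_mem b₂ r)) (G.β_nonneg r)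
  linear_combination hconst + hlinear

lemma mul_Cprop_le_mul_Cprop (h₁ : 0 < w₁) (h₂ : 0 < w₂) {G : CGame w₁ w₂}
    {a₁ a₂ b₁ b₂ : Finset (Fin G.n)} (hA : G.IsNashProp a₁ a₂) (hB : G.IsProfile b₁ b₂)
    (hB' : G.IsProfile b₂ b₁) : D * G.Cprop a₁ a₂ ≤ N * G.Cprop b₁ b₂ := by
  have hdev := ((hA.isNashUni h₁ h₂).add_mul_le_deviations hB hB'
    W.l₁_nonneg W.l₂_nonneg W.m₁_nonneg W.m₂_nonneg).trans
      (hW.deviations_le h₁.le h₂.le G a₁ a₂ b₁ b₂)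
  rw [W.balance₁, W.balance₂] at hdev
  rw [Cprop_eq_uni G a₁ a₂]
  linarith

lemma Cprop_le_div_mul_Cprop (h₁ : 0 < w₁) (h₂ : 0 < w₂) (hD : 0 < D) {G : CGame w₁ w₂}
    {a₁ a₂ b₁ b₂ : Finset (Fin G.n)} (hA : G.IsNashProp a₁ a₂) (hB : G.IsProfile b₁ b₂)
    (hB' : G.IsProfile b₂ b₁) : G.Cprop a₁ a₂ ≤ N / D * G.Cprop b₁ b₂ := by
  rw [div_mul_eq_mul_div, le_div_iff₀' hD]
  exact hW.mul_Cprop_le_mul_Cprop h₁ h₂ hA hB hB'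

end IsFeasible

end DeviationWeights

/-- Weights for small `w₁ / w₂`. Among the eight inequalities in `IsFeasible.linear₁` and
`IsFeasible.linear₂`, those with `(p₁, p₂) ≠ (0, 0)`, except `linear₂` at `(1, 1)`, are equalities;
up to scaling, this determines the weights together with `N` and `D`. -/
noncomputable def smallRatioWeights (h₁ : 0 < w₁) (h₂ : 0 < w₂) :
    DeviationWeights w₁ w₂
      (2 * w₁ ^ 4 + 3 * w₁ ^ 3 * w₂ + 4 * w₁ ^ 2 * w₂ ^ 2 + 4 * w₁ * w₂ ^ 3 + 2 * w₂ ^ 4) where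
  l₁ := w₁ ^ 3 * (2 * w₁ ^ 2 + 4 * w₁ * w₂ + 3 * w₂ ^ 2)
  l₂ := w₁ * w₂ ^ 2 * (3 * w₁ ^ 2 + 4 * w₁ * w₂ + 2 * w₂ ^ 2)
  m₁ := w₁ ^ 2 * w₂ * (3 * w₁ ^ 2 + 4 * w₁ * w₂ + 2 * w₂ ^ 2)
  m₂ := w₂ * (w₁ ^ 4 + 2 * w₁ ^ 2 * w₂ ^ 2 + 4 * w₁ * w₂ ^ 3 + 2 * w₂ ^ 4)
  s₁ := w₁ ^ 3 * w₂ * (w₁ + 2 * w₂)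
  s₂ := w₁ ^ 3 * w₂ * (2 * w₁ + w₂)
  l₁_nonneg := by positivity
  l₂_nonneg := by positivity
  m₁_nonneg := by positivity
  m₂_nonneg := by positivity
  s₁_nonneg := by positivity
  s₂_nonneg := by positivity
  balance₁ := by ring
  balance₂ := by ring

lemma isFeasible_smallRatioWeights (h₂ : 0 < w₂) (h : w₂ ≤ w₁)
    (hcubic : w₁ ^ 3 - w₁ ^ 2 * w₂ - 2 * w₁ * w₂ ^ 2 - w₂ ^ 3 ≤ 0) :
    (smallRatioWeights (h₂.trans_le h) h₂).IsFeasible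
      (2 * w₁ ^ 4 + 6 * w₁ ^ 3 * w₂ + 8 * w₁ ^ 2 * w₂ ^ 2 + 6 * w₁ * w₂ ^ 3 + 2 * w₂ ^ 4) := by
  have h₁ : 0 < w₁ := h₂.trans_le h
  have : 0 ≤ w₁ - w₂ := sub_nonneg.mpr h
  have hcubic' : 0 ≤ -(w₁ ^ 3 - w₁ ^ 2 * w₂ - 2 * w₁ * w₂ ^ 2 - w₂ ^ 3) := neg_nonneg.mpr hcubic
  constructor <;> dsimp only [smallRatioWeights]
  case const₁ =>
    have : 0 ≤ w₂ * (w₁ + w₂) *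
        (-(w₁ ^ 3 - w₁ ^ 2 * w₂ - 2 * w₁ * w₂ ^ 2 - w₂ ^ 3) + w₂ * (w₁ + w₂) * (w₁ - w₂)) := by
      positivity
    linarith
  case const₂ =>
    have : 0 ≤ w₁ ^ 2 * w₂ * (w₁ + w₂) * (w₁ + 2 * w₂) := by positivity
    linarith
  case linear₁ =>
    rintro _ (rfl | rfl) _ (rfl | rfl)
    · have : 0 ≤ 2 * w₁ ^ 3 * w₂ * (w₁ ^ 2 + w₁ * w₂ + w₂ ^ 2) := by positivity
      linarith
    · exact le_of_eq (by ring)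
    · exact le_of_eq (by ring)
    · exact le_of_eq (by ring)
  case linear₂ =>
    rintro _ (rfl | rfl) _ (rfl | rfl)
    · have : 0 ≤ 2 * w₁ * w₂ ^ 2 * -(w₁ ^ 3 - w₁ ^ 2 * w₂ - 2 * w₁ * w₂ ^ 2 - w₂ ^ 3) := by
        positivity
      linarith
    · exact le_of_eq (by ring)
    · exact le_of_eq (by ring)
    · have : 0 ≤ 2 * w₁ * w₂ * (w₁ + w₂) ^ 3 * (w₁ - w₂) := by positivity
      linarith
  case overlap =>
    have : 0 ≤ w₁ * w₂ * (w₁ + w₂) ^ 2 * (w₁ + 2 * w₂) ^ 2 := by positivity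
    linarith

/-- Weights for large `w₁ / w₂`. Among the eight inequalities in `IsFeasible.linear₁` and
`IsFeasible.linear₂`, those with `p₂ = 1`, except `linear₂` at `(1, 1)`, and `linear₂` with `p₂ = 0`
are equalities; up to scaling, this determines the weights together with `N` and `D`. -/
noncomputable def largeRatioWeights (h₂ : 0 < w₂) (h : w₂ ≤ w₁) :
    DeviationWeights w₁ w₂
      (2 * w₁ ^ 4 + w₁ ^ 3 * w₂ + 2 * w₁ ^ 2 * w₂ ^ 2 + 3 * w₁ * w₂ ^ 3 + w₂ ^ 4) :=
  have h₁ : 0 < w₁ := h₂.trans_le h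
  { l₁ := 2 * w₁ ^ 5 + 2 * w₁ ^ 4 * w₂ + w₁ ^ 3 * w₂ ^ 2 - w₁ * w₂ ^ 4 - w₂ ^ 5
    l₂ := w₂ ^ 2 * (w₁ ^ 3 + 4 * w₁ ^ 2 * w₂ + 3 * w₁ * w₂ ^ 2 + w₂ ^ 3)
    m₁ := w₂ * (w₁ ^ 4 + 2 * w₁ ^ 3 * w₂ + 5 * w₁ ^ 2 * w₂ ^ 2 + 5 * w₁ * w₂ ^ 3 + 2 * w₂ ^ 4)
    m₂ := w₁ * w₂ * (w₁ ^ 3 + w₁ * w₂ ^ 2 + w₂ ^ 3)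
    s₁ := w₁ * w₂ * (w₁ ^ 3 + w₁ * w₂ ^ 2 + w₂ ^ 3)
    s₂ := w₂ ^ 2 * (w₁ ^ 3 + 4 * w₁ ^ 2 * w₂ + 3 * w₁ * w₂ ^ 2 + w₂ ^ 3)
    l₁_nonneg := by
      have : 0 ≤ w₁ - w₂ := sub_nonneg.mpr h
      have : 0 ≤ (w₁ + w₂) ^ 2 * (w₁ ^ 2 + w₂ ^ 2) * (w₁ - w₂) +
          w₁ ^ 3 * (w₁ ^ 2 + w₁ * w₂ + w₂ ^ 2) := by
        positivity
      linarith
    l₂_nonneg := by positivity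
    m₁_nonneg := by positivity
    m₂_nonneg := by positivity
    s₁_nonneg := by positivity
    s₂_nonneg := by positivity
    balance₁ := by ring
    balance₂ := by ring }

lemma isFeasible_largeRatioWeights (h₂ : 0 < w₂) (h : w₂ ≤ w₁)
    (hcubic : 0 ≤ w₁ ^ 3 - w₁ ^ 2 * w₂ - 2 * w₁ * w₂ ^ 2 - w₂ ^ 3) :
    (largeRatioWeights h₂ h).IsFeasible
      (2 * w₁ ^ 4 + 4 * w₁ ^ 3 * w₂ + 4 * w₁ ^ 2 * w₂ ^ 2 + 2 * w₁ * w₂ ^ 3) := by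
  have h₁ : 0 < w₁ := h₂.trans_le h
  have : 0 ≤ w₁ - w₂ := sub_nonneg.mpr h
  constructor <;> dsimp only [largeRatioWeights]
  case const₁ =>
    have : 0 ≤ w₂ * (w₁ + w₂) *
        ((w₁ ^ 3 - w₁ ^ 2 * w₂ - 2 * w₁ * w₂ ^ 2 - w₂ ^ 3) + w₁ * w₂ * (w₁ - w₂)) := by
      positivity
    linarith
  case const₂ =>
    have : 0 ≤ w₂ * (w₁ - w₂) * (w₁ ^ 3 + 4 * w₁ ^ 2 * w₂ + 3 * w₁ * w₂ ^ 2 + w₂ ^ 3) := by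
      positivity
    linarith
  case linear₁ =>
    rintro _ (rfl | rfl) _ (rfl | rfl)
    · have : 0 ≤ 2 * w₂ * (w₁ ^ 2 + w₁ * w₂ + w₂ ^ 2) *
          ((w₁ ^ 3 - w₁ ^ 2 * w₂ - 2 * w₁ * w₂ ^ 2 - w₂ ^ 3) + w₁ * w₂ * (w₁ + w₂)) := by
        positivity
      linarith
    · exact le_of_eq (by ring)
    · have : 0 ≤ 2 * w₂ * (w₁ ^ 2 + w₁ * w₂ + w₂ ^ 2) *
          (w₁ ^ 3 - w₁ ^ 2 * w₂ - 2 * w₁ * w₂ ^ 2 - w₂ ^ 3) := by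
        positivity
      linarith
    · exact le_of_eq (by ring)
  case linear₂ =>
    rintro _ (rfl | rfl) _ (rfl | rfl)
    · exact le_of_eq (by ring)
    · exact le_of_eq (by ring)
    · exact le_of_eq (by ring)
    · have : 0 ≤ 2 * w₁ * w₂ ^ 2 * (w₁ + w₂) * (w₁ ^ 2 + w₁ * w₂ + w₂ ^ 2) := by positivity
      linarith
  case overlap =>
    have : 0 ≤ w₂ * (w₁ + w₂) * (w₁ - w₂) *
        (3 * w₁ ^ 3 + 6 * w₁ ^ 2 * w₂ + 5 * w₁ * w₂ ^ 2 + w₂ ^ 3) := by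
      positivity
    linarith

end CGame

lemma cubic_eq_zero_of_quartic_eq_zero {σ : ℝ} (hσpos : 0 < σ)
    (hσroot : σ ^ 4 - 3 * σ ^ 2 - 3 * σ - 1 = 0) : σ ^ 3 - σ ^ 2 - 2 * σ - 1 = 0 := by
  have hfac : (σ + 1) * (σ ^ 3 - σ ^ 2 - 2 * σ - 1) = 0 := by linear_combination hσroot
  exact (mul_eq_zero.mp hfac).resolve_left (by positivity)

lemma exists_pos_cubic_eq_sub_mul {σ x y : ℝ} (hσpos : 0 < σ)
    (hσ : σ ^ 3 - σ ^ 2 - 2 * σ - 1 = 0) (hx : 0 < x) (hy : 0 ≤ y) :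
    ∃ Q > 0, x ^ 3 - x ^ 2 * y - 2 * x * y ^ 2 - y ^ 3 = (x - σ * y) * Q := by
  have hinv : σ ^ 2 - σ - 2 = σ⁻¹ := by
    field_simp
    linear_combination hσ
  have hone : 0 < σ - 1 := by nlinarith [inv_pos.mpr hσpos]
  refine ⟨x ^ 2 + (σ - 1) * (x * y) + (σ ^ 2 - σ - 2) * y ^ 2, ?_, ?_⟩
  · rw [hinv]
    positivity
  · linear_combination y ^ 3 * hσ

theorem poa_sym_prop_upper_general {w₁ w₂ : ℝ} (h₂ : 0 < w₂) (h : w₂ ≤ w₁) {σ : ℝ}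
    (hσpos : 0 < σ) (hσroot : σ ^ 4 - 3 * σ ^ 2 - 3 * σ - 1 = 0)
    {G : CGame w₁ w₂} {a₁ a₂ b₁ b₂ : Finset (Fin G.n)}
    (hA : G.IsNashProp a₁ a₂) (hB : G.IsProfile b₁ b₂) (hB' : G.IsProfile b₂ b₁) :
    (w₁ ≤ σ * w₂ →
      G.Cprop a₁ a₂ ≤
        ((2 * w₁ ^ 4 + 6 * w₁ ^ 3 * w₂ + 8 * w₁ ^ 2 * w₂ ^ 2 + 6 * w₁ * w₂ ^ 3 +
            2 * w₂ ^ 4) /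
          (2 * w₁ ^ 4 + 3 * w₁ ^ 3 * w₂ + 4 * w₁ ^ 2 * w₂ ^ 2 + 4 * w₁ * w₂ ^ 3 +
            2 * w₂ ^ 4)) * G.Cprop b₁ b₂) ∧
    (σ * w₂ ≤ w₁ →
      G.Cprop a₁ a₂ ≤
        ((2 * w₁ ^ 4 + 4 * w₁ ^ 3 * w₂ + 4 * w₁ ^ 2 * w₂ ^ 2 + 2 * w₁ * w₂ ^ 3) /
          (2 * w₁ ^ 4 + w₁ ^ 3 * w₂ + 2 * w₁ ^ 2 * w₂ ^ 2 + 3 * w₁ * w₂ ^ 3 +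
            w₂ ^ 4)) * G.Cprop b₁ b₂) := by
  have h₁ : 0 < w₁ := h₂.trans_le h
  have hσ := cubic_eq_zero_of_quartic_eq_zero hσpos hσroot
  obtain ⟨Q, hQ, hfactor⟩ := exists_pos_cubic_eq_sub_mul hσpos hσ h₁ h₂.le
  refine ⟨fun hw => ?_, fun hw => ?_⟩
  · have hcubic := hfactor.trans_le (mul_nonpos_of_nonpos_of_nonneg (sub_nonpos.mpr hw) hQ.le)
    exact (CGame.isFeasible_smallRatioWeights h₂ h hcubic).Cprop_le_div_mul_Cprop h₁ h₂
      (by positivity) hA hB hB'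
  · have hcubic := (mul_nonneg (sub_nonneg.mpr hw) hQ.le).trans_eq hfactor.symm
    exact (CGame.isFeasible_largeRatioWeights h₂ h hcubic).Cprop_le_div_mul_Cprop h₁ h₂
      (by positivity) hA hB hB'

/-- parametric price of anarchy upper bounds for symmetric
simultaneous proportionally weighted two-player congestion games, `w₁ ≥ w₂ > 0`,
with threshold ratio `σ`, the unique positive real root of `x⁴ − 3x² − 3x − 1`. -/
theorem poa_sym_prop_upper (w₁ w₂ : ℝ) (h₂ : 0 < w₂) (h : w₂ ≤ w₁) (σ : ℝ)
    (hσpos : 0 < σ) (hσroot : σ ^ 4 - 3 * σ ^ 2 - 3 * σ - 1 = 0)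
    (hσuniq : ∀ x : ℝ, 0 < x → x ^ 4 - 3 * x ^ 2 - 3 * x - 1 = 0 → x = σ)
    (G : CGame w₁ w₂) (hsym : G.Symm) (a₁ a₂ b₁ b₂ : Finset (Fin G.n))
    (hA : G.IsNashProp a₁ a₂) (hB : G.IsProfile b₁ b₂) :
    (w₁ ≤ σ * w₂ →
      G.Cprop a₁ a₂ ≤
        ((2 * w₁ ^ 4 + 6 * w₁ ^ 3 * w₂ + 8 * w₁ ^ 2 * w₂ ^ 2 + 6 * w₁ * w₂ ^ 3 +
            2 * w₂ ^ 4) /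
          (2 * w₁ ^ 4 + 3 * w₁ ^ 3 * w₂ + 4 * w₁ ^ 2 * w₂ ^ 2 + 4 * w₁ * w₂ ^ 3 +
            2 * w₂ ^ 4)) * G.Cprop b₁ b₂) ∧
    (σ * w₂ ≤ w₁ →
      G.Cprop a₁ a₂ ≤
        ((2 * w₁ ^ 4 + 4 * w₁ ^ 3 * w₂ + 4 * w₁ ^ 2 * w₂ ^ 2 + 2 * w₁ * w₂ ^ 3) /
          (2 * w₁ ^ 4 + w₁ ^ 3 * w₂ + 2 * w₁ ^ 2 * w₂ ^ 2 + 3 * w₁ * w₂ ^ 3 +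
            w₂ ^ 4)) * G.Cprop b₁ b₂) :=
  poa_sym_prop_upper_general h₂ h hσpos hσroot hA hB (hsym.isProfile_swap hB)
end

section
/- Let w₁, w₂ > 0 with w₂ ≤ w₁ ≤ σ·w₂, where σ is the unique positive real root of x⁴ − 3·x² − 3·x − 1 (σ ≈ 2.1479). There exist a symmetric weighted two-player congestion game with weights w₁, w₂ and proportional costs, a pure Nash equilibrium A, and an action profile B such that C(B) > 0 and C(A) = ((2·w₁⁴ + 6·w₁³·w₂ + 8·w₁²·w₂² + 6·w₁·w₂³ + 2·w₂⁴)/(2·w₁⁴ + 3·w₁³·w₂ + 4·w₁²·w₂² + 4·w₁·w₂³ + 2·w₂⁴)) · C(B). -/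
open Finset Real

/-!
Put `s = w₁ + w₂` and `q = w₁ ^ 2 + w₁ * w₂ + w₂ ^ 2`. The linear coefficients `s ^ 2`, `w₁ * s`,
`s ^ 2`, `w₂ * s`, `q` are balanced so that, against the opponent's equilibrium action, player `i`
pays `s ^ 2 * (s + wᵢ)` per unit of weight for the equilibrium action and for either action of the
alternative profile, while copying the opponent costs `s * q` more. In the alternative profile the
two actions are disjoint, so its social cost is only
`w₁ ^ 2 * (s ^ 2 + q) + w₂ ^ 2 * (2 * s ^ 2)`.
-/

namespace CGame

variable {w₁ w₂ : ℝ} (G : CGame w₁ w₂) (a₁ a₂ : Finset (Fin G.n))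

theorem C1uni_eq_sum :
    G.C1uni a₁ a₂ = ∑ r ∈ a₁, (G.α r + G.β r * (w₁ + if r ∈ a₂ then w₂ else 0)) :=
  sum_congr rfl fun r hr => by rw [load, if_pos hr]

theorem C2uni_eq_sum :
    G.C2uni a₁ a₂ = ∑ r ∈ a₂, (G.α r + G.β r * ((if r ∈ a₁ then w₁ else 0) + w₂)) :=
  sum_congr rfl fun r hr => by rw [load, if_pos hr]

theorem Cprop_eq_weighted_sum_uni :
    G.Cprop a₁ a₂ = w₁ * G.C1uni a₁ a₂ + w₂ * G.C2uni a₁ a₂ := rfl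

variable {G a₁ a₂}

theorem IsNashUni.isNashProp (hG : G.IsNashUni a₁ a₂) (h₁ : 0 ≤ w₁) (h₂ : 0 ≤ w₂) :
    G.IsNashProp a₁ a₂ :=
  ⟨hG.1, fun b hb => mul_le_mul_of_nonneg_left (hG.2.1 b hb) h₁,
    fun b hb => mul_le_mul_of_nonneg_left (hG.2.2 b hb) h₂⟩

end CGame

namespace lowerBoundGame

/-- Player 1's equilibrium action. -/
def nash₁ : Finset (Fin 5) := {2, 3, 4}

/-- Player 2's equilibrium action. -/
def nash₂ : Finset (Fin 5) := {0, 1, 4}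

/-- Player 1's action in the profile that the equilibrium is compared with. -/
def alt₁ : Finset (Fin 5) := {1, 3, 4}

/-- Player 2's action in the profile that the equilibrium is compared with. -/
def alt₂ : Finset (Fin 5) := {0, 2}

/-- The action collection shared by both players. -/
def actions : Finset (Finset (Fin 5)) := {nash₁, nash₂, alt₁, alt₂}

/-- The coefficients `β` of the five resources. -/
def coeff (w₁ w₂ : ℝ) : Fin 5 → ℝ :=
  ![(w₁ + w₂) ^ 2, w₁ * (w₁ + w₂), (w₁ + w₂) ^ 2, w₂ * (w₁ + w₂), w₁ ^ 2 + w₁ * w₂ + w₂ ^ 2]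

theorem coeff_nonneg {w₁ w₂ : ℝ} (h₁ : 0 ≤ w₁) (h₂ : 0 ≤ w₂) (r : Fin 5) :
    0 ≤ coeff w₁ w₂ r := by
  fin_cases r <;> dsimp [coeff] <;> positivity

end lowerBoundGame

open lowerBoundGame in
/-- The symmetric game on five resources, with `α = 0`, that attains the lower bound: its
equilibrium is `(nash₁, nash₂)`, to be compared with the profile `(alt₁, alt₂)`. -/
abbrev lowerBoundGame {w₁ w₂ : ℝ} (h₁ : 0 ≤ w₁) (h₂ : 0 ≤ w₂) : CGame w₁ w₂ where
  n := 5
  A1 := actions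
  A2 := actions
  A1_nonempty := insert_nonempty _ _
  A2_nonempty := insert_nonempty _ _
  α _ := 0
  β := coeff w₁ w₂
  α_nonneg _ := le_rfl
  β_nonneg := coeff_nonneg h₁ h₂

namespace lowerBoundGame

variable {w₁ w₂ : ℝ} (h₁ : 0 ≤ w₁) (h₂ : 0 ≤ w₂)

theorem C1uni_eq_sum_coeff (a₁ a₂ : Finset (Fin 5)) :
    (lowerBoundGame h₁ h₂).C1uni a₁ a₂ =
      ∑ r ∈ a₁, coeff w₁ w₂ r * (w₁ + if r ∈ a₂ then w₂ else 0) := by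
  simp only [CGame.C1uni_eq_sum, zero_add]

theorem C2uni_eq_sum_coeff (a₁ a₂ : Finset (Fin 5)) :
    (lowerBoundGame h₁ h₂).C2uni a₁ a₂ =
      ∑ r ∈ a₂, coeff w₁ w₂ r * ((if r ∈ a₁ then w₁ else 0) + w₂) := by
  simp only [CGame.C2uni_eq_sum, zero_add]

theorem C1uni_nash₂_of_ne {b : Finset (Fin 5)} (hb : b ∈ actions) (hne : b ≠ nash₂) :
    (lowerBoundGame h₁ h₂).C1uni b nash₂ = (w₁ + w₂) ^ 2 * (2 * w₁ + w₂) := by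
  have hcases : b = nash₁ ∨ b = alt₁ ∨ b = alt₂ := by grind [actions]
  rw [C1uni_eq_sum_coeff]
  rcases hcases with rfl | rfl | rfl <;> simp [nash₁, nash₂, alt₁, alt₂, coeff] <;> ring

theorem C2uni_nash₁_of_ne {b : Finset (Fin 5)} (hb : b ∈ actions) (hne : b ≠ nash₁) :
    (lowerBoundGame h₁ h₂).C2uni nash₁ b = (w₁ + w₂) ^ 2 * (w₁ + 2 * w₂) := by
  have hcases : b = nash₂ ∨ b = alt₁ ∨ b = alt₂ := by grind [actions]
  rw [C2uni_eq_sum_coeff]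
  rcases hcases with rfl | rfl | rfl <;> simp [nash₁, nash₂, alt₁, alt₂, coeff] <;> ring

theorem C1uni_nash₁_nash₂ :
    (lowerBoundGame h₁ h₂).C1uni nash₁ nash₂ = (w₁ + w₂) ^ 2 * (2 * w₁ + w₂) :=
  C1uni_nash₂_of_ne h₁ h₂ (by decide) (by decide)

theorem C2uni_nash₁_nash₂ :
    (lowerBoundGame h₁ h₂).C2uni nash₁ nash₂ = (w₁ + w₂) ^ 2 * (w₁ + 2 * w₂) :=
  C2uni_nash₁_of_ne h₁ h₂ (by decide) (by decide)

theorem C1uni_nash₂_nash₂ :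
    (lowerBoundGame h₁ h₂).C1uni nash₂ nash₂ =
      (w₁ + w₂) ^ 2 * (2 * w₁ + w₂) + (w₁ + w₂) * (w₁ ^ 2 + w₁ * w₂ + w₂ ^ 2) := by
  rw [C1uni_eq_sum_coeff]
  simp [nash₂, coeff]
  ring

theorem C2uni_nash₁_nash₁ :
    (lowerBoundGame h₁ h₂).C2uni nash₁ nash₁ =
      (w₁ + w₂) ^ 2 * (w₁ + 2 * w₂) + (w₁ + w₂) * (w₁ ^ 2 + w₁ * w₂ + w₂ ^ 2) := by
  rw [C2uni_eq_sum_coeff]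
  simp [nash₁, coeff]
  ring

theorem isNashUni_nash : (lowerBoundGame h₁ h₂).IsNashUni nash₁ nash₂ := by
  refine ⟨by simp [CGame.IsProfile, actions], fun b hb => ?_, fun b hb => ?_⟩
  · rw [C1uni_nash₁_nash₂]
    obtain rfl | hne := eq_or_ne b nash₂
    · rw [C1uni_nash₂_nash₂]
      exact le_add_of_nonneg_right (by positivity)
    · exact (C1uni_nash₂_of_ne h₁ h₂ hb hne).ge
  · rw [C2uni_nash₁_nash₂]
    obtain rfl | hne := eq_or_ne b nash₁
    · rw [C2uni_nash₁_nash₁]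
      exact le_add_of_nonneg_right (by positivity)
    · exact (C2uni_nash₁_of_ne h₁ h₂ hb hne).ge

theorem Cprop_nash :
    (lowerBoundGame h₁ h₂).Cprop nash₁ nash₂ =
      2 * (w₁ + w₂) ^ 2 * (w₁ ^ 2 + w₁ * w₂ + w₂ ^ 2) := by
  rw [CGame.Cprop_eq_weighted_sum_uni, C1uni_nash₁_nash₂, C2uni_nash₁_nash₂]
  ring

theorem C1uni_alt₁_alt₂ :
    (lowerBoundGame h₁ h₂).C1uni alt₁ alt₂ =
      w₁ * ((w₁ + w₂) ^ 2 + (w₁ ^ 2 + w₁ * w₂ + w₂ ^ 2)) := by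
  rw [C1uni_eq_sum_coeff]
  simp [alt₁, alt₂, coeff]
  ring

theorem C2uni_alt₁_alt₂ :
    (lowerBoundGame h₁ h₂).C2uni alt₁ alt₂ = w₂ * (2 * (w₁ + w₂) ^ 2) := by
  rw [C2uni_eq_sum_coeff]
  simp [alt₁, alt₂, coeff]
  ring

theorem isProfile_alt : (lowerBoundGame h₁ h₂).IsProfile alt₁ alt₂ := by
  simp [CGame.IsProfile, actions]

theorem Cprop_alt :
    (lowerBoundGame h₁ h₂).Cprop alt₁ alt₂ =
      2 * w₁ ^ 4 + 3 * w₁ ^ 3 * w₂ + 4 * w₁ ^ 2 * w₂ ^ 2 + 4 * w₁ * w₂ ^ 3 + 2 * w₂ ^ 4 := by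
  rw [CGame.Cprop_eq_weighted_sum_uni, C1uni_alt₁_alt₂, C2uni_alt₁_alt₂]
  ring

theorem Cprop_alt_pos (h : 0 < w₁ + w₂) : 0 < (lowerBoundGame h₁ h₂).Cprop alt₁ alt₂ := by
  have hpos : 0 < w₁ ∨ 0 < w₂ := by
    by_contra! hle
    linarith
  rw [Cprop_alt]
  rcases hpos with hw₁ | hw₂ <;> positivity

end lowerBoundGame

open lowerBoundGame in
theorem poa_sym_prop_lower_mid_general (w₁ w₂ : ℝ) (h₁ : 0 ≤ w₁) (h₂ : 0 ≤ w₂)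
    (h : 0 < w₁ + w₂) :
    ∃ (G : CGame w₁ w₂), G.Symm ∧
      ∃ a₁ a₂ b₁ b₂ : Finset (Fin G.n),
        G.IsNashProp a₁ a₂ ∧ G.IsProfile b₁ b₂ ∧ 0 < G.Cprop b₁ b₂ ∧
        G.Cprop a₁ a₂ =
          ((2 * w₁ ^ 4 + 6 * w₁ ^ 3 * w₂ + 8 * w₁ ^ 2 * w₂ ^ 2 + 6 * w₁ * w₂ ^ 3 +
              2 * w₂ ^ 4) /
            (2 * w₁ ^ 4 + 3 * w₁ ^ 3 * w₂ + 4 * w₁ ^ 2 * w₂ ^ 2 + 4 * w₁ * w₂ ^ 3 +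
              2 * w₂ ^ 4)) * G.Cprop b₁ b₂ := by
  have hpos := Cprop_alt_pos h₁ h₂ h
  refine ⟨lowerBoundGame h₁ h₂, rfl, nash₁, nash₂, alt₁, alt₂,
    (isNashUni_nash h₁ h₂).isNashProp h₁ h₂, isProfile_alt h₁ h₂, hpos, ?_⟩
  rw [← Cprop_alt h₁ h₂, div_mul_cancel₀ _ hpos.ne', Cprop_nash]
  ring

/-- matching lower-bound instance for symmetric simultaneous
proportionally weighted games, case `w₂ ≤ w₁ ≤ σw₂`. -/
theorem poa_sym_prop_lower_mid (w₁ w₂ : ℝ) (h₁ : 0 < w₁) (h₂ : 0 < w₂) (σ : ℝ)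
    (hσpos : 0 < σ) (hσroot : σ ^ 4 - 3 * σ ^ 2 - 3 * σ - 1 = 0)
    (hσuniq : ∀ x : ℝ, 0 < x → x ^ 4 - 3 * x ^ 2 - 3 * x - 1 = 0 → x = σ)
    (hlo : w₂ ≤ w₁) (hhi : w₁ ≤ σ * w₂) :
    ∃ (G : CGame w₁ w₂), G.Symm ∧
      ∃ a₁ a₂ b₁ b₂ : Finset (Fin G.n),
        G.IsNashProp a₁ a₂ ∧ G.IsProfile b₁ b₂ ∧ 0 < G.Cprop b₁ b₂ ∧
        G.Cprop a₁ a₂ =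
          ((2 * w₁ ^ 4 + 6 * w₁ ^ 3 * w₂ + 8 * w₁ ^ 2 * w₂ ^ 2 + 6 * w₁ * w₂ ^ 3 +
              2 * w₂ ^ 4) /
            (2 * w₁ ^ 4 + 3 * w₁ ^ 3 * w₂ + 4 * w₁ ^ 2 * w₂ ^ 2 + 4 * w₁ * w₂ ^ 3 +
              2 * w₂ ^ 4)) * G.Cprop b₁ b₂ :=
  poa_sym_prop_lower_mid_general w₁ w₂ h₁.le h₂.le (add_pos h₁ h₂)
end
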